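/- arXiv:2302.10678 — 4 statements merged into one kernel-verified Lean document; each statement's English description precedes it below -/
import Mathlib

section
/- Let φ : ℝ → ℝ be continuous and non-increasing. Then for every u ∈ ℝ, lim_{λ → 0⁺} φ_λ(u) = φ(u). -/
/-- The resolvent `J_λ = (I - λφ)⁻¹` of a (continuous, non-increasing) function
`φ : ℝ → ℝ`. -/
noncomputable def Jlam (φ : ℝ → ℝ) (lam : ℝ) : ℝ → ℝ :=
  Function.invFun (fun u : ℝ => u - lam * φ u)

/-- The Yosida approximation `φ_λ(u) = (J_λ(u) - u)/λ`. -/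
noncomputable def yosida (φ : ℝ → ℝ) (lam : ℝ) (u : ℝ) : ℝ :=
  (Jlam φ lam u - u) / lam

/-- For a continuous non-increasing `φ`, the Yosida approximations converge
pointwise: `φ_λ(u) → φ(u)` as `λ → 0⁺`. -/
theorem yosida_tendsto (φ : ℝ → ℝ) (hc : Continuous φ)
    (hmono : ∀ u₁ u₂ : ℝ, u₁ ≤ u₂ → φ u₂ ≤ φ u₁) :
    ∀ u : ℝ, Filter.Tendsto (fun lam : ℝ => yosida φ lam u)
      (nhdsWithin 0 (Set.Ioi 0)) (nhds (φ u)) := by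
  intro u
  have hex : ∀ lam : ℝ, 0 < lam → ∃ x : ℝ, x - lam * φ x = u := by
    intro lam hl
    have hcont : Continuous (fun x : ℝ => x - lam * φ x) := by fun_prop
    have hsub : ∀ a b : ℝ, a - lam * φ a ≤ u → u ≤ b - lam * φ b →
        ∃ x : ℝ, x - lam * φ x = u := by
      intro a b ha hb
      exact mem_range_of_exists_le_of_exists_ge hcont ⟨a, ha⟩ ⟨b, hb⟩
    rcases le_total 0 (φ u) with h | h
    · have h0 : 0 ≤ lam * φ u := mul_nonneg hl.le h
      have h1 := mul_le_mul_of_nonneg_left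
        (hmono u (u + lam * φ u) (by linarith)) hl.le
      exact hsub u (u + lam * φ u) (by linarith) (by linarith)
    · have h0 : lam * φ u ≤ 0 := mul_nonpos_of_nonneg_of_nonpos hl.le h
      have h1 := mul_le_mul_of_nonneg_left
        (hmono (u + lam * φ u) u (by linarith)) hl.le
      exact hsub (u + lam * φ u) u (by linarith) (by linarith)
  have hJ : ∀ lam : ℝ, 0 < lam → Jlam φ lam u - lam * φ (Jlam φ lam u) = u := by
    intro lam hl
    exact Function.invFun_eq (f := fun x : ℝ => x - lam * φ x) (hex lam hl)
  have hbd : ∀ lam : ℝ, 0 < lam → |Jlam φ lam u - u| ≤ lam * |φ u| := by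
    intro lam hl
    have h := hJ lam hl
    generalize Jlam φ lam u = x at h
    have hp : lam * φ u ≤ lam * |φ u| := mul_le_mul_of_nonneg_left (le_abs_self _) hl.le
    have hn : lam * (-φ u) ≤ lam * |φ u| := mul_le_mul_of_nonneg_left (neg_le_abs _) hl.le
    have h0 : 0 ≤ lam * |φ u| := by positivity
    rw [abs_le]
    rcases le_total u x with hx | hx
    · have h1 := mul_le_mul_of_nonneg_left (hmono u x hx) hl.le
      constructor <;> linarith
    · have h1 := mul_le_mul_of_nonneg_left (hmono x u hx) hl.le
      constructor <;> linarith
  have hlim : Filter.Tendsto (fun lam : ℝ => Jlam φ lam u)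
      (nhdsWithin 0 (Set.Ioi 0)) (nhds u) := by
    rw [tendsto_iff_dist_tendsto_zero]
    have hz : Filter.Tendsto (fun lam : ℝ => lam * |φ u|)
        (nhdsWithin 0 (Set.Ioi 0)) (nhds 0) := by
      have hc0 : Continuous (fun lam : ℝ => lam * |φ u|) := by fun_prop
      have := hc0.tendsto 0
      rw [zero_mul] at this
      exact this.mono_left nhdsWithin_le_nhds
    refine squeeze_zero' (Filter.Eventually.of_forall fun _ => dist_nonneg) ?_ hz
    filter_upwards [self_mem_nhdsWithin] with lam hl
    rw [Real.dist_eq]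
    exact hbd lam hl
  refine ((hc.tendsto u).comp hlim).congr' ?_
  filter_upwards [self_mem_nhdsWithin] with lam hl
  have hl' : (0 : ℝ) < lam := hl
  have h := hJ lam hl'
  simp only [Function.comp, yosida]
  rw [eq_div_iff hl'.ne']
  linarith
end

section
/- Let φ : ℝ → ℝ be continuously differentiable and non-increasing. Then for every λ > 0 the Yosida approximation φ_λ is differentiable on ℝ, and for every u ∈ ℝ, lim_{λ → 0⁺} φ_λ'(u) = φ'(u). -/
lemma yos_aux_expand (φ : ℝ → ℝ) (hmono : ∀ u₁ u₂ : ℝ, u₁ ≤ u₂ → φ u₂ ≤ φ u₁) (lam : ℝ)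
    (hl : 0 < lam) (a b : ℝ) : |a - b| ≤ |(a - lam * φ a) - (b - lam * φ b)| := by
  rcases le_total a b with h | h
  · have := mul_le_mul_of_nonneg_left (hmono _ _ h) hl.le
    rw [abs_of_nonpos (by linarith), abs_of_nonpos (by linarith)]
    linarith
  · have := mul_le_mul_of_nonneg_left (hmono _ _ h) hl.le
    rw [abs_of_nonneg (by linarith), abs_of_nonneg (by linarith)]
    linarith

lemma yos_aux_inv (φ : ℝ → ℝ) (hc : Continuous φ)
    (hmono : ∀ u₁ u₂ : ℝ, u₁ ≤ u₂ → φ u₂ ≤ φ u₁) (lam : ℝ)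
    (hl : 0 < lam) (y : ℝ) : Jlam φ lam y - lam * φ (Jlam φ lam y) = y := by
  have hs : ∃ x, (fun u : ℝ => u - lam * φ u) x = y := by
    have hcg : Continuous (fun u : ℝ => u - lam * φ u) := by fun_prop
    have hp : 0 ≤ lam * |φ y| := by positivity
    have h1 := mul_le_mul_of_nonneg_left (le_abs_self (φ y)) hl.le
    have h2 := mul_le_mul_of_nonneg_left (neg_abs_le (φ y)) hl.le
    apply mem_range_of_exists_le_of_exists_ge hcg
    · refine ⟨y - lam * |φ y|, ?_⟩
      have := mul_le_mul_of_nonneg_left (hmono (y - lam * |φ y|) y (by linarith)) hl.le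
      linarith
    · refine ⟨y + lam * |φ y|, ?_⟩
      have := mul_le_mul_of_nonneg_left (hmono y (y + lam * |φ y|) (by linarith)) hl.le
      linarith
  exact Function.invFun_eq hs

lemma yos_aux_deriv (φ : ℝ → ℝ) (hφ : ContDiff ℝ 1 φ)
    (hmono : ∀ u₁ u₂ : ℝ, u₁ ≤ u₂ → φ u₂ ≤ φ u₁) (lam : ℝ) (hl : 0 < lam) (u : ℝ) :
    HasDerivAt (yosida φ lam)
      (deriv φ (Jlam φ lam u) / (1 - lam * deriv φ (Jlam φ lam u))) u := by
  have hinv := yos_aux_inv φ hφ.continuous hmono lam hl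
  have hlip : LipschitzWith 1 (Jlam φ lam) := by
    apply LipschitzWith.of_dist_le_mul
    intro a b
    have := yos_aux_expand φ hmono lam hl (Jlam φ lam a) (Jlam φ lam b)
    rw [hinv, hinv] at this
    simpa [Real.dist_eq] using this
  have hanti : Antitone φ := fun a b h => hmono a b h
  have hd : deriv φ (Jlam φ lam u) ≤ 0 := hanti.deriv_nonpos
  have hne : 1 - lam * deriv φ (Jlam φ lam u) ≠ 0 := by nlinarith
  have hφd : HasDerivAt φ (deriv φ (Jlam φ lam u)) (Jlam φ lam u) :=
    (hφ.differentiable (by norm_num) _).hasDerivAt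
  have hg : HasDerivAt (fun v : ℝ => v - lam * φ v) (1 - lam * deriv φ (Jlam φ lam u))
      (Jlam φ lam u) := (hasDerivAt_id' _).sub (hφd.const_mul lam)
  have hJ : HasDerivAt (Jlam φ lam) (1 - lam * deriv φ (Jlam φ lam u))⁻¹ u :=
    HasDerivAt.of_local_left_inverse hlip.continuous.continuousAt hg hne
      (Filter.Eventually.of_forall hinv)
  have := (hJ.sub (hasDerivAt_id' u)).div_const lam
  refine HasDerivAt.congr_deriv this ?_
  field_simp
  ring

/-- For a continuously differentiable non-increasing `φ`, each Yosida
approximation `φ_λ` (`λ > 0`) is differentiable, and `φ_λ'(u) → φ'(u)` as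
`λ → 0⁺` for every `u`. -/
theorem yosida_deriv_tendsto (φ : ℝ → ℝ) (hφ : ContDiff ℝ 1 φ)
    (hmono : ∀ u₁ u₂ : ℝ, u₁ ≤ u₂ → φ u₂ ≤ φ u₁) :
    (∀ lam : ℝ, 0 < lam → Differentiable ℝ (yosida φ lam)) ∧
    (∀ u : ℝ, Filter.Tendsto (fun lam : ℝ => deriv (yosida φ lam) u)
      (nhdsWithin 0 (Set.Ioi 0)) (nhds (deriv φ u))) := by
  refine ⟨fun lam hl u => (yos_aux_deriv φ hφ hmono lam hl u).differentiableAt, fun u => ?_⟩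
  have hJ : Filter.Tendsto (fun lam : ℝ => Jlam φ lam u) (nhdsWithin 0 (Set.Ioi 0)) (nhds u) := by
    rw [tendsto_iff_dist_tendsto_zero]
    have hlim : Filter.Tendsto (fun lam : ℝ => |lam * φ u|) (nhdsWithin 0 (Set.Ioi 0))
        (nhds 0) := by
      have : Continuous (fun lam : ℝ => |lam * φ u|) := by fun_prop
      have h := this.tendsto 0
      simp only [zero_mul, abs_zero] at h
      exact h.mono_left nhdsWithin_le_nhds
    refine squeeze_zero' (Filter.Eventually.of_forall fun _ => dist_nonneg) ?_ hlim
    filter_upwards [self_mem_nhdsWithin] with lam hl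
    have := yos_aux_expand φ hmono lam hl (Jlam φ lam u) u
    rw [yos_aux_inv φ hφ.continuous hmono lam hl] at this
    simpa [Real.dist_eq] using this
  have hD : Filter.Tendsto (fun lam : ℝ => deriv φ (Jlam φ lam u)) (nhdsWithin 0 (Set.Ioi 0))
      (nhds (deriv φ u)) := ((hφ.continuous_deriv le_rfl).tendsto u).comp hJ
  have h0 : Filter.Tendsto (fun lam : ℝ => lam) (nhdsWithin 0 (Set.Ioi 0)) (nhds (0 : ℝ)) :=
    nhdsWithin_le_nhds
  have hT := hD.div ((tendsto_const_nhds (x := (1 : ℝ))).sub (h0.mul hD)) (by simp)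
  simp only [zero_mul, sub_zero, div_one] at hT
  refine hT.congr' ?_
  filter_upwards [self_mem_nhdsWithin] with lam hl
  exact (yos_aux_deriv φ hφ hmono lam hl u).deriv.symm
end

section
/- Let d ≥ 1, T > 0, x₀ ∈ ℝ^d, κ ∈ ℝ, K > 0, ν > 0, β ∈ [0,2), and θ ∈ (0, 2/ν). There exists a constant K' = K'(T, θ, κ) > 0, independent of x₀ and depending on the nonlinearity only through κ, with the following property. Let φ : [0,T]×ℝ^d×ℝ → ℝ be continuous and satisfy: (i) φ(t,x,u₁) - φ(t,x,u₂) ≤ κ(u₁ - u₂) for all t ∈ [0,T], x ∈ ℝ^d, and u₁ > u₂; (ii) |φ(t,x,u)| ≤ K exp(K(|x - x₀|^β + |u|^ν)) for all t, x, u. If z₁, z₂ ∈ C_{θ,x₀} and w₁, w₂ ∈ C_{θ,x₀} satisfy, for i = 1,2 and all (t,x) ∈ [0,T]×ℝ^d, w_i(t,x) = ∫_0^t ∫_{ℝ^d} G(t-s, x-y) φ(s, y, w_i(s,y)) dy ds + z_i(t,x), then |w₁ - w₂|_{θ,x₀} ≤ K' |z₁ - z₂|_{θ,x₀}. -/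
open MeasureTheory

/-- The heat kernel of `(1/2)Δ` on `ℝ^d`. -/
noncomputable def heatKernel (d : ℕ) (t : ℝ) (x : EuclideanSpace ℝ (Fin d)) : ℝ :=
  (2 * Real.pi * t) ^ (-(d : ℝ) / 2) * Real.exp (-‖x‖ ^ 2 / (2 * t))

/-- The weighted supremum norm `sup_{t ∈ [0,T]} sup_x |z(t,x)|/(1+‖x-x₀‖^θ)`. -/
noncomputable def wNorm (d : ℕ) (T θ : ℝ) (x₀ : EuclideanSpace ℝ (Fin d))
    (z : ℝ → EuclideanSpace ℝ (Fin d) → ℝ) : ℝ :=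
  ⨆ (t : Set.Icc (0 : ℝ) T) (x : EuclideanSpace ℝ (Fin d)),
    |z t.1 x| / (1 + ‖x - x₀‖ ^ θ)

/-- Membership in the weighted space `C_{θ,x₀}([0,T] × ℝ^d)`: continuity on
`[0,T] × ℝ^d` together with vanishing of the weighted quotient at spatial
infinity (uniformly in `t ∈ [0,T]`). -/
def memC (d : ℕ) (T θ : ℝ) (x₀ : EuclideanSpace ℝ (Fin d))
    (z : ℝ → EuclideanSpace ℝ (Fin d) → ℝ) : Prop :=
  ContinuousOn (fun p : ℝ × EuclideanSpace ℝ (Fin d) => z p.1 p.2)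
      (Set.Icc 0 T ×ˢ Set.univ) ∧
  ∀ ε > 0, ∃ R : ℝ, ∀ x : EuclideanSpace ℝ (Fin d), R ≤ ‖x‖ →
    ∀ t ∈ Set.Icc (0 : ℝ) T, |z t x| / (1 + ‖x - x₀‖ ^ θ) < ε


namespace HeatLip

open MeasureTheory

/-- Standard Gaussian measure given by the density `heatKernel d 1`. -/
noncomputable def gm (d : ℕ) : Measure (EuclideanSpace ℝ (Fin d)) :=
  volume.withDensity (fun ξ => ENNReal.ofReal (heatKernel d 1 ξ))

/-- The heat semigroup applied to `g`. -/
noncomputable def PP (d : ℕ) (r : ℝ) (g : EuclideanSpace ℝ (Fin d) → ℝ)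
    (x : EuclideanSpace ℝ (Fin d)) : ℝ := ∫ ξ, g (x + √r • ξ) ∂(gm d)

lemma hk_nonneg (d : ℕ) {r : ℝ} (hr : 0 ≤ r) (x : EuclideanSpace ℝ (Fin d)) :
    0 ≤ heatKernel d r x := by
  unfold heatKernel; positivity

lemma hk_meas (d : ℕ) (r : ℝ) : Measurable (heatKernel d r) := by
  unfold heatKernel
  fun_prop

lemma integral_gm {F : Type*} [NormedAddCommGroup F] [NormedSpace ℝ F] (d : ℕ)
    (g : EuclideanSpace ℝ (Fin d) → F) :
    ∫ ξ, g ξ ∂(gm d) = ∫ ξ, heatKernel d 1 ξ • g ξ := by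
  unfold gm
  rw [integral_withDensity_eq_integral_toReal_smul]
  · simp [ENNReal.toReal_ofReal (hk_nonneg d zero_le_one _)]
  · exact (hk_meas d 1).ennreal_ofReal
  · simp

lemma integrable_gm {F : Type*} [NormedAddCommGroup F] [NormedSpace ℝ F] (d : ℕ)
    (g : EuclideanSpace ℝ (Fin d) → F) :
    Integrable g (gm d) ↔ Integrable (fun ξ => heatKernel d 1 ξ • g ξ) := by
  unfold gm
  rw [integrable_withDensity_iff_integrable_smul']
  · simp [ENNReal.toReal_ofReal (hk_nonneg d zero_le_one _)]
  · exact (hk_meas d 1).ennreal_ofReal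
  · simp

lemma integrable_exp_neg (d : ℕ) {b : ℝ} (hb : 0 < b) :
    Integrable (fun v : EuclideanSpace ℝ (Fin d) => Real.exp (-b * ‖v‖ ^ 2)) := by
  have h := (GaussianFourier.integrable_cexp_neg_mul_sq_norm_add (b := (b : ℂ))
    (by simpa using hb) 0 (0 : EuclideanSpace ℝ (Fin d))).norm
  refine h.congr (ae_of_all _ fun v => ?_)
  simp only [Complex.norm_exp]
  congr 1
  simp [← Complex.ofReal_pow]

lemma integrable_exp_quarter (d : ℕ) :
    Integrable (fun ξ : EuclideanSpace ℝ (Fin d) => Real.exp (‖ξ‖ ^ 2 / 4)) (gm d) := by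
  rw [integrable_gm]
  have h := (integrable_exp_neg d (b := 1/4) (by norm_num)).const_mul
    ((2 * Real.pi * 1) ^ (-(d : ℝ) / 2))
  refine h.congr (ae_of_all _ fun v => ?_)
  simp only [heatKernel, smul_eq_mul]
  rw [mul_assoc ((2 * Real.pi * 1) ^ (-(d : ℝ) / 2)), ← Real.exp_add]
  congr 2
  ring

instance gm_prob (d : ℕ) : IsProbabilityMeasure (gm d) := by
  have hint : ∫ ξ, heatKernel d 1 ξ = 1 := by
    simp only [heatKernel]
    rw [integral_const_mul]
    have h := GaussianFourier.integral_rexp_neg_mul_sq_norm (V := EuclideanSpace ℝ (Fin d))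
      (b := 1/2) (by norm_num)
    have h2 : ∀ v : EuclideanSpace ℝ (Fin d), Real.exp (-‖v‖ ^ 2 / (2 * 1))
      = Real.exp (-(1/2) * ‖v‖ ^ 2) := fun v => by congr 1; ring
    simp only [h2]
    rw [h]
    simp only [finrank_euclideanSpace, Fintype.card_fin]
    rw [show Real.pi / (1 / 2) = 2 * Real.pi * 1 by ring, ← Real.rpow_add (by positivity)]
    rw [show -(d : ℝ) / 2 + d / 2 = 0 by ring, Real.rpow_zero]
  constructor
  unfold gm
  rw [withDensity_apply _ MeasurableSet.univ, Measure.restrict_univ,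
    ← ofReal_integral_eq_lintegral_ofReal, hint, ENNReal.ofReal_one]
  · by_contra hc
    rw [integral_undef hc] at hint
    norm_num at hint
  · exact ae_of_all _ fun x => hk_nonneg d zero_le_one x

lemma charFun_gm (d : ℕ) (t : EuclideanSpace ℝ (Fin d)) :
    charFun (gm d) t = Complex.exp (-(‖t‖ ^ 2 / 2 : ℝ)) := by
  rw [charFun_apply, integral_gm]
  have h := GaussianFourier.integral_cexp_neg_mul_sq_norm_add (b := (1/2 : ℂ))
    (by norm_num) Complex.I t
  have h1 : ∀ ξ : EuclideanSpace ℝ (Fin d), heatKernel d 1 ξ •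
      Complex.exp ((inner ℝ ξ t : ℝ) * Complex.I) =
      (((2 * Real.pi * 1) ^ (-(d : ℝ) / 2) : ℝ) : ℂ) *
      Complex.exp (-(1/2) * (‖ξ‖ : ℂ) ^ 2 + Complex.I * (inner ℝ t ξ : ℝ)) := by
    intro ξ
    simp only [heatKernel]
    rw [Complex.real_smul, Complex.ofReal_mul, mul_assoc, Complex.ofReal_exp, ← Complex.exp_add,
      real_inner_comm]
    congr 2
    push_cast
    ring
  simp only [h1]
  rw [integral_const_mul, h, ← mul_assoc]
  have h2 : (((2 * Real.pi * 1) ^ (-(d : ℝ) / 2) : ℝ) : ℂ) *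
      ((Real.pi : ℂ) / (1 / 2)) ^ ((Module.finrank ℝ (EuclideanSpace ℝ (Fin d)) : ℂ) / 2) = 1 := by
    have : ((Real.pi : ℂ) / (1 / 2)) ^ ((Module.finrank ℝ (EuclideanSpace ℝ (Fin d)) : ℂ) / 2)
      = (((2 * Real.pi * 1) ^ ((d : ℝ) / 2) : ℝ) : ℂ) := by
      rw [Complex.ofReal_cpow (by positivity)]
      simp only [finrank_euclideanSpace, Fintype.card_fin]
      congr 1
      · push_cast; ring
      · push_cast; ring
    rw [this, ← Complex.ofReal_mul, ← Real.rpow_add (by positivity)]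
    rw [show -(d : ℝ) / 2 + d / 2 = 0 by ring, Real.rpow_zero, Complex.ofReal_one]
  rw [h2, one_mul]
  congr 1
  rw [Complex.I_sq]
  push_cast
  ring

lemma gm_conv (d : ℕ) {a b : ℝ} (ha : 0 ≤ a) (hb : 0 ≤ b) :
    ((gm d).map (fun x => √a • x)) ∗ ((gm d).map (fun x => √b • x)) =
      (gm d).map (fun x => √(a + b) • x) := by
  have i1 : ∀ c : ℝ, IsProbabilityMeasure ((gm d).map (fun x => c • x)) := fun c =>
    Measure.isProbabilityMeasure_map (by fun_prop)
  have := i1 √a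
  have := i1 √b
  have := i1 √(a+b)
  apply Measure.ext_of_charFun
  funext t
  rw [charFun_conv, charFun_map_smul, charFun_map_smul, charFun_map_smul, charFun_gm, charFun_gm,
    charFun_gm, ← Complex.exp_add]
  congr 1
  simp only [norm_smul, mul_pow, Real.norm_eq_abs, sq_abs, Real.sq_sqrt ha, Real.sq_sqrt hb,
    Real.sq_sqrt (add_nonneg ha hb)]
  push_cast
  ring

lemma gm_neg (d : ℕ) : (gm d).map (fun x => (-1 : ℝ) • x) = gm d := by
  have : IsProbabilityMeasure ((gm d).map (fun x => (-1 : ℝ) • x)) :=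
    Measure.isProbabilityMeasure_map (by fun_prop)
  apply Measure.ext_of_charFun
  funext t
  rw [charFun_map_smul, charFun_gm, charFun_gm]
  simp

lemma PP_semigroup (d : ℕ) {a b : ℝ} (ha : 0 ≤ a) (hb : 0 ≤ b)
    (g : EuclideanSpace ℝ (Fin d) → ℝ) (hg : Continuous g) (x : EuclideanSpace ℝ (Fin d))
    (hi : Integrable (fun ξ => g (x + √(a + b) • ξ)) (gm d)) :
    ∫ ξ, PP d b g (x + √a • ξ) ∂(gm d) = PP d (a + b) g x := by
  have hsm : ∀ c : ℝ, AEMeasurable (fun y : EuclideanSpace ℝ (Fin d) => c • y) (gm d) := fun c => by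
    fun_prop
  have hg' : Continuous (fun y => g (x + y)) := by fun_prop
  have hI : Integrable (fun y => g (x + y))
      (((gm d).map (fun x => √a • x)) ∗ ((gm d).map (fun x => √b • x))) := by
    rw [gm_conv d ha hb, integrable_map_measure hg'.aestronglyMeasurable (hsm _)]
    exact hi
  have h := integral_conv hI
  rw [gm_conv d ha hb, integral_map (hsm _) hg'.aestronglyMeasurable] at h
  unfold PP
  rw [h, integral_map (hsm _)]
  · congr 1
    funext ξ
    rw [integral_map (hsm _)]
    · simp only [add_assoc]
    · exact Continuous.aestronglyMeasurable (by fun_prop)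
  · apply StronglyMeasurable.aestronglyMeasurable
    apply StronglyMeasurable.integral_prod_right
    exact Continuous.stronglyMeasurable (by fun_prop)

lemma PP_eq_kernel (d : ℕ) {r : ℝ} (hr : 0 < r) (g : EuclideanSpace ℝ (Fin d) → ℝ)
    (x : EuclideanSpace ℝ (Fin d)) :
    ∫ y, heatKernel d r (x - y) * g y = PP d r g x := by
  unfold PP
  rw [integral_gm]
  rw [← integral_add_left_eq_self _ x]
  have h := Measure.integral_comp_smul (volume : Measure (EuclideanSpace ℝ (Fin d)))
    (fun y => heatKernel d r (x - (x + y)) * g (x + y)) √r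
  have hs : 0 < √r := Real.sqrt_pos.2 hr
  rw [abs_of_nonneg (by positivity), finrank_euclideanSpace, Fintype.card_fin] at h
  have h2 : ∫ y, heatKernel d r (x - (x + y)) * g (x + y) = (√r ^ d) *
    ∫ y, heatKernel d r (x - (x + √r • y)) * g (x + √r • y) := by
    rw [h, smul_eq_mul, mul_inv_cancel_left₀ (by positivity)]
  rw [h2, ← integral_const_mul]
  congr 1
  funext ξ
  rw [smul_eq_mul, ← mul_assoc]
  congr 1
  simp only [heatKernel]
  rw [← mul_assoc]
  congr 1
  · rw [mul_one, Real.mul_rpow (by positivity) hr.le, mul_comm, mul_assoc]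
    have : r ^ (-(d : ℝ) / 2) * √r ^ d = 1 := by
      rw [Real.sqrt_eq_rpow, ← Real.rpow_natCast, ← Real.rpow_mul hr.le, ← Real.rpow_add hr]
      rw [show -(d : ℝ) / 2 + 1 / 2 * d = 0 by ring, Real.rpow_zero]
    rw [this, mul_one]
  · congr 1
    rw [sub_add_cancel_left, norm_neg, norm_smul, mul_pow, Real.norm_eq_abs, sq_abs,
      Real.sq_sqrt hr.le]
    field_simp

end HeatLip

namespace HeatLip

open MeasureTheory

lemma sq_split {d : ℕ} {T a b : ℝ} (hT : 0 < T) (ha : 0 ≤ a) (hb : 0 ≤ b) (hab : a + b ≤ T)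
    (p ξ η : EuclideanSpace ℝ (Fin d)) :
    ‖p + √a • ξ + √b • η‖ ^ 2 / (8 * T) ≤ ‖p‖ ^ 2 / (4 * T) + (‖ξ‖ ^ 2 / 4 + ‖η‖ ^ 2 / 4) := by
  have h1 : ‖p + √a • ξ + √b • η‖ ≤ ‖p‖ + (√a * ‖ξ‖ + √b * ‖η‖) := by
    have := norm_add₃_le (a := p) (b := √a • ξ) (c := √b • η)
    simp only [norm_smul, Real.norm_eq_abs, abs_of_nonneg (Real.sqrt_nonneg _)] at this
    linarith
  have h2 : ‖p + √a • ξ + √b • η‖ ^ 2 ≤ (‖p‖ + (√a * ‖ξ‖ + √b * ‖η‖)) ^ 2 := by gcongr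
  have h3 : (√a * ‖ξ‖ + √b * ‖η‖) ^ 2 ≤ T * (‖ξ‖ ^ 2 + ‖η‖ ^ 2) := by
    have e1 := Real.sq_sqrt ha
    have e2 := Real.sq_sqrt hb
    have : (√a * ‖ξ‖ + √b * ‖η‖) ^ 2 ≤ (√a ^ 2 + √b ^ 2) * (‖ξ‖ ^ 2 + ‖η‖ ^ 2) := by
      nlinarith [sq_nonneg (√a * ‖η‖ - √b * ‖ξ‖)]
    rw [e1, e2] at this
    refine this.trans ?_
    gcongr
  have h4 : ‖p + √a • ξ + √b • η‖ ^ 2 ≤ 2 * ‖p‖ ^ 2 + 2 * (T * (‖ξ‖ ^ 2 + ‖η‖ ^ 2)) := by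
    nlinarith [sq_nonneg (‖p‖ - (√a * ‖ξ‖ + √b * ‖η‖))]
  rw [div_le_iff₀ (by positivity)]
  refine h4.trans (le_of_eq ?_)
  field_simp
  ring

lemma sq_split1 {d : ℕ} {T a : ℝ} (hT : 0 < T) (hab : a ≤ T)
    (p ξ : EuclideanSpace ℝ (Fin d)) :
    ‖p + √a • ξ‖ ^ 2 / (8 * T) ≤ ‖p‖ ^ 2 / (4 * T) + ‖ξ‖ ^ 2 / 4 := by
  rcases le_total 0 a with ha | ha
  · have := sq_split hT ha le_rfl (by linarith) p ξ 0
    simpa using this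
  · rw [Real.sqrt_eq_zero_of_nonpos ha]
    have := sq_split hT le_rfl le_rfl (by linarith) p ξ 0
    simpa using this

lemma growth_shift {d : ℕ} {T a A : ℝ} (hT : 0 < T) (hA : 0 ≤ A) (hab : a ≤ T)
    {x₀ : EuclideanSpace ℝ (Fin d)} {g : EuclideanSpace ℝ (Fin d) → ℝ}
    (hg : ∀ y, |g y| ≤ A * Real.exp (‖y - x₀‖ ^ 2 / (8 * T))) (x ξ : EuclideanSpace ℝ (Fin d)) :
    |g (x + √a • ξ)| ≤ A * Real.exp (‖x - x₀‖ ^ 2 / (4 * T)) * Real.exp (‖ξ‖ ^ 2 / 4) := by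
  refine (hg _).trans ?_
  rw [mul_assoc, ← Real.exp_add]
  gcongr
  have := sq_split1 hT hab (x - x₀) ξ
  rwa [show x - x₀ + √a • ξ = x + √a • ξ - x₀ by abel] at this

lemma PP_integrable {d : ℕ} {T a A : ℝ} (hT : 0 < T) (hA : 0 ≤ A) (hab : a ≤ T)
    {x₀ : EuclideanSpace ℝ (Fin d)} {g : EuclideanSpace ℝ (Fin d) → ℝ} (hc : Continuous g)
    (hg : ∀ y, |g y| ≤ A * Real.exp (‖y - x₀‖ ^ 2 / (8 * T))) (x : EuclideanSpace ℝ (Fin d)) :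
    Integrable (fun ξ => g (x + √a • ξ)) (gm d) := by
  refine ((integrable_exp_quarter d).const_mul (A * Real.exp (‖x - x₀‖ ^ 2 / (4 * T)))).mono'
    (Continuous.aestronglyMeasurable (by fun_prop)) (ae_of_all _ fun ξ => ?_)
  exact growth_shift hT hA hab hg x ξ

lemma PP_bound {d : ℕ} {T a A : ℝ} (hT : 0 < T) (hA : 0 ≤ A) (hab : a ≤ T)
    {x₀ : EuclideanSpace ℝ (Fin d)} {g : EuclideanSpace ℝ (Fin d) → ℝ}
    (hg : ∀ y, |g y| ≤ A * Real.exp (‖y - x₀‖ ^ 2 / (8 * T))) (x : EuclideanSpace ℝ (Fin d)) :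
    |PP d a g x| ≤ A * Real.exp (‖x - x₀‖ ^ 2 / (4 * T)) *
      ∫ ξ, Real.exp (‖ξ‖ ^ 2 / 4) ∂(gm d) := by
  unfold PP
  rw [← integral_const_mul, ← Real.norm_eq_abs]
  exact norm_integral_le_of_norm_le
    ((integrable_exp_quarter d).const_mul (A * Real.exp (‖x - x₀‖ ^ 2 / (4 * T))))
    (ae_of_all _ fun ξ => growth_shift hT hA hab hg x ξ)

lemma PP_contOn {d : ℕ} {T A : ℝ} (hT : 0 < T) (hA : 0 ≤ A)
    {x₀ : EuclideanSpace ℝ (Fin d)} {g : EuclideanSpace ℝ (Fin d) → ℝ} (hc : Continuous g)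
    (hg : ∀ y, |g y| ≤ A * Real.exp (‖y - x₀‖ ^ 2 / (8 * T))) :
    ContinuousOn (fun p : ℝ × EuclideanSpace ℝ (Fin d) => PP d p.1 g p.2)
      (Set.Iic T ×ˢ Set.univ) := by
  rintro ⟨t, x⟩ ht
  unfold PP
  refine continuousWithinAt_of_dominated
    (bound := fun ξ => A * Real.exp ((‖x - x₀‖ + 1) ^ 2 / (4 * T)) * Real.exp (‖ξ‖ ^ 2 / 4))
    ?_ ?_ ?_ ?_
  · exact Filter.Eventually.of_forall fun p => Continuous.aestronglyMeasurable (by fun_prop)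
  · have h1 : ∀ᶠ p : ℝ × EuclideanSpace ℝ (Fin d) in nhds (t, x),
        ‖p.2 - x₀‖ < ‖x - x₀‖ + 1 := by
      have : Continuous (fun p : ℝ × EuclideanSpace ℝ (Fin d) => ‖p.2 - x₀‖) := by fun_prop
      exact this.continuousAt.eventually_lt_const (by simp)
    filter_upwards [nhdsWithin_le_nhds h1, self_mem_nhdsWithin] with p hp hp2
    refine ae_of_all _ fun ξ => ?_
    refine (growth_shift hT hA hp2.1 hg p.2 ξ).trans ?_
    gcongr
  · exact (integrable_exp_quarter d).const_mul _
  · exact ae_of_all _ fun ξ => Continuous.continuousWithinAt (by fun_prop)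

lemma time_meas {d : ℕ} {f : ℝ → EuclideanSpace ℝ (Fin d) → ℝ}
    (hc : Continuous (Function.uncurry f)) (t : ℝ) (x : EuclideanSpace ℝ (Fin d)) :
    StronglyMeasurable (fun s => PP d (t - s) (f s) x) := by
  unfold PP
  apply StronglyMeasurable.integral_prod_right
  apply Continuous.stronglyMeasurable
  have : (Function.uncurry fun (s : ℝ) (ξ : EuclideanSpace ℝ (Fin d)) => f s (x + √(t - s) • ξ)) =
    fun p => Function.uncurry f (p.1, x + √(t - p.1) • p.2) := rfl
  rw [this]
  fun_prop

lemma time_integrable {d : ℕ} {T A : ℝ} (hT : 0 < T) (hA : 0 ≤ A)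
    {x₀ : EuclideanSpace ℝ (Fin d)} {f : ℝ → EuclideanSpace ℝ (Fin d) → ℝ}
    (hc : Continuous (Function.uncurry f))
    (hg : ∀ s y, |f s y| ≤ A * Real.exp (‖y - x₀‖ ^ 2 / (8 * T)))
    {t a b : ℝ} (ht : t ≤ T) (ha : 0 ≤ a) (x : EuclideanSpace ℝ (Fin d)) :
    IntegrableOn (fun s => PP d (t - s) (f s) x) (Set.Ioc a b) := by
  refine Measure.integrableOn_of_bounded (M := A * Real.exp (‖x - x₀‖ ^ 2 / (4 * T)) *
      ∫ ξ, Real.exp (‖ξ‖ ^ 2 / 4) ∂(gm d)) (by simp) (time_meas hc t x).aestronglyMeasurable ?_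
  filter_upwards [ae_restrict_mem measurableSet_Ioc] with s hs
  exact PP_bound hT hA (by linarith [hs.1]) (hg s) x

/-- Duhamel integral. -/
noncomputable def VV (d : ℕ) (f : ℝ → EuclideanSpace ℝ (Fin d) → ℝ) (t : ℝ)
    (x : EuclideanSpace ℝ (Fin d)) : ℝ := ∫ s in Set.Ioc 0 t, PP d (t - s) (f s) x

lemma VV_semigroup {d : ℕ} {T A : ℝ} (hT : 0 < T) (hA : 0 ≤ A)
    {x₀ : EuclideanSpace ℝ (Fin d)} {f : ℝ → EuclideanSpace ℝ (Fin d) → ℝ}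
    (hc : Continuous (Function.uncurry f))
    (hg : ∀ s y, |f s y| ≤ A * Real.exp (‖y - x₀‖ ^ 2 / (8 * T)))
    {t h : ℝ} (hh : 0 ≤ h) (ht : t + h ≤ T) (x : EuclideanSpace ℝ (Fin d)) :
    Integrable (fun ξ => VV d f t (x + √h • ξ)) (gm d) ∧
    ∫ ξ, VV d f t (x + √h • ξ) ∂(gm d) = ∫ s in Set.Ioc 0 t, PP d (t + h - s) (f s) x := by
  set μ : Measure ℝ := volume.restrict (Set.Ioc 0 t) with hμ
  set C := A * Real.exp (‖x - x₀‖ ^ 2 / (4 * T)) with hC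
  have hF : Integrable (fun p : (ℝ × EuclideanSpace ℝ (Fin d)) × EuclideanSpace ℝ (Fin d) =>
      f p.1.1 (x + √h • p.1.2 + √(t - p.1.1) • p.2)) ((μ.prod (gm d)).prod (gm d)) := by
    have h1 : Integrable (fun s : ℝ => C) μ := integrable_const _
    have h2 := (h1.mul_prod (integrable_exp_quarter d)).mul_prod (integrable_exp_quarter d)
    have hae : ∀ᵐ p ∂((μ.prod (gm d)).prod (gm d)), p.1.1 ∈ Set.Ioc 0 t := by
      have a0 : ∀ᵐ s ∂μ, s ∈ Set.Ioc 0 t := ae_restrict_mem measurableSet_Ioc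
      have a1 : ∀ᵐ q ∂(μ.prod (gm d)), q.1 ∈ Set.Ioc 0 t :=
        Measure.quasiMeasurePreserving_fst.ae a0
      exact Measure.quasiMeasurePreserving_fst.ae a1
    refine h2.mono' ?_ ?_
    · apply Continuous.aestronglyMeasurable
      have : (fun p : (ℝ × EuclideanSpace ℝ (Fin d)) × EuclideanSpace ℝ (Fin d) =>
        f p.1.1 (x + √h • p.1.2 + √(t - p.1.1) • p.2)) =
        fun p => Function.uncurry f (p.1.1, x + √h • p.1.2 + √(t - p.1.1) • p.2) := rfl
      rw [this]
      fun_prop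
    · filter_upwards [hae] with p hp
      rw [Real.norm_eq_abs]
      refine (hg _ _).trans ?_
      rw [hC, mul_assoc, mul_assoc, ← Real.exp_add, ← Real.exp_add]
      gcongr
      have := sq_split hT hh (b := t - p.1.1) (by linarith [hp.2]) (by linarith [hp.1])
        (x - x₀) p.1.2 p.2
      rwa [show x - x₀ + √h • p.1.2 + √(t - p.1.1) • p.2 =
        x + √h • p.1.2 + √(t - p.1.1) • p.2 - x₀ by abel] at this
  have hG := hF.integral_prod_left
  constructor
  · exact hG.integral_prod_right
  · unfold VV
    have := integral_integral_swap (f := fun s ξ => PP d (t - s) (f s) (x + √h • ξ)) hG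
    rw [← this]
    refine setIntegral_congr_fun measurableSet_Ioc fun s hs => ?_
    have hcs : Continuous (f s) := by
      have : f s = fun y => Function.uncurry f (s, y) := rfl
      rw [this]; fun_prop
    have := PP_semigroup d hh (b := t - s) (by linarith [hs.2]) (f s) hcs x
      (PP_integrable hT hA (by linarith [hs.1]) hcs (hg s) x)
    simp only [this]
    congr 1
    ring

end HeatLip

namespace HeatLip

open MeasureTheory

/-- The weight. -/
noncomputable def rho (d : ℕ) (θ : ℝ) (x₀ x : EuclideanSpace ℝ (Fin d)) : ℝ := 1 + ‖x - x₀‖ ^ θ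

lemma rho_one_le (d : ℕ) (θ : ℝ) (x₀ x : EuclideanSpace ℝ (Fin d)) : 1 ≤ rho d θ x₀ x := by
  unfold rho
  have : 0 ≤ ‖x - x₀‖ ^ θ := by positivity
  linarith

lemma rho_pos (d : ℕ) (θ : ℝ) (x₀ x : EuclideanSpace ℝ (Fin d)) : 0 < rho d θ x₀ x :=
  lt_of_lt_of_le one_pos (rho_one_le d θ x₀ x)

lemma rho_cont (d : ℕ) {θ : ℝ} (hθ : 0 < θ) (x₀ : EuclideanSpace ℝ (Fin d)) :
    Continuous (rho d θ x₀) := by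
  unfold rho
  have : Continuous (fun x : EuclideanSpace ℝ (Fin d) => ‖x - x₀‖ ^ θ) :=
    Continuous.rpow_const (by fun_prop) (fun _ => Or.inr hθ.le)
  fun_prop

lemma rpow_le_exp {θ ε : ℝ} (hθ : 0 < θ) (hε : 0 < ε) :
    ∃ C : ℝ, 0 ≤ C ∧ ∀ n : ℝ, 0 ≤ n → n ^ θ ≤ C * Real.exp (ε * n ^ 2) := by
  refine ⟨(θ / 2 / ε) ^ (θ / 2), by positivity, fun n hn => ?_⟩
  have h1 : n ^ θ = (n ^ 2) ^ (θ / 2) := by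
    rw [← Real.rpow_natCast, ← Real.rpow_mul hn]
    congr 1
    push_cast
    ring
  have h2 : n ^ 2 ≤ (θ / 2 / ε) * Real.exp (ε * n ^ 2 / (θ / 2)) := by
    have := Real.add_one_le_exp (ε * n ^ 2 / (θ / 2))
    have h3 : n ^ 2 = (θ / 2 / ε) * (ε * n ^ 2 / (θ / 2)) := by field_simp
    calc n ^ 2 = (θ / 2 / ε) * (ε * n ^ 2 / (θ / 2)) := h3
      _ ≤ _ := by gcongr; linarith
  rw [h1]
  calc (n ^ 2) ^ (θ / 2) ≤ ((θ / 2 / ε) * Real.exp (ε * n ^ 2 / (θ / 2))) ^ (θ / 2) := by gcongr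
    _ = _ := by
      rw [Real.mul_rpow (by positivity) (by positivity), ← Real.exp_mul]
      congr 2
      field_simp

lemma rho_growth (d : ℕ) {θ T : ℝ} (hθ : 0 < θ) (hT : 0 < T) :
    ∃ A : ℝ, 0 ≤ A ∧ ∀ x₀ y : EuclideanSpace ℝ (Fin d),
      |rho d θ x₀ y| ≤ A * Real.exp (‖y - x₀‖ ^ 2 / (8 * T)) := by
  obtain ⟨C, hC, h⟩ := rpow_le_exp hθ (ε := 1 / (8 * T)) (by positivity)
  refine ⟨1 + C, by positivity, fun x₀ y => ?_⟩
  rw [abs_of_pos (rho_pos _ _ _ _)]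
  have h1 := h ‖y - x₀‖ (norm_nonneg _)
  have h2 : 1 / (8 * T) * ‖y - x₀‖ ^ 2 = ‖y - x₀‖ ^ 2 / (8 * T) := by ring
  rw [h2] at h1
  have h3 : 1 ≤ Real.exp (‖y - x₀‖ ^ 2 / (8 * T)) := Real.one_le_exp (by positivity)
  unfold rho
  linarith

lemma add_rpow_le {θ a b : ℝ} (hθ : 0 < θ) (ha : 0 ≤ a) (hb : 0 ≤ b) :
    (a + b) ^ θ ≤ 2 ^ θ * (a ^ θ + b ^ θ) := by
  have hp : 0 ≤ a ^ θ := by positivity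
  have hq : 0 ≤ b ^ θ := by positivity
  rcases le_total a b with h | h
  · calc (a + b) ^ θ ≤ (2 * b) ^ θ := by gcongr; linarith
      _ = 2 ^ θ * b ^ θ := Real.mul_rpow (by norm_num) hb
      _ ≤ _ := by gcongr; linarith
  · calc (a + b) ^ θ ≤ (2 * a) ^ θ := by gcongr; linarith
      _ = 2 ^ θ * a ^ θ := Real.mul_rpow (by norm_num) ha
      _ ≤ _ := by gcongr; linarith

lemma rho_upper (d : ℕ) {θ T : ℝ} (hθ : 0 < θ) (hT : 0 < T) :
    ∃ C : ℝ, 0 ≤ C ∧ ∀ x₀ x : EuclideanSpace ℝ (Fin d), ∀ t ≤ T,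
      PP d t (rho d θ x₀) x ≤ C * rho d θ x₀ x := by
  obtain ⟨B, hB, hBn⟩ := rpow_le_exp hθ (ε := 1 / 4) (by positivity)
  obtain ⟨A, hA, hAg⟩ := rho_growth d hθ hT
  have hcont : Continuous (fun ξ : EuclideanSpace ℝ (Fin d) => ‖ξ‖ ^ θ) :=
    Continuous.rpow_const (by fun_prop) (fun _ => Or.inr hθ.le)
  have hint : Integrable (fun ξ : EuclideanSpace ℝ (Fin d) => ‖ξ‖ ^ θ) (gm d) := by
    refine ((integrable_exp_quarter d).const_mul B).mono' hcont.aestronglyMeasurable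
      (ae_of_all _ fun ξ => ?_)
    rw [Real.norm_eq_abs, abs_of_nonneg (by positivity)]
    have := hBn ‖ξ‖ (norm_nonneg _)
    rwa [show 1 / 4 * ‖ξ‖ ^ 2 = ‖ξ‖ ^ 2 / 4 by ring] at this
  have hint2 : Integrable (fun ξ : EuclideanSpace ℝ (Fin d) =>
      1 + 2 ^ θ * (1 + √T ^ θ * ‖ξ‖ ^ θ)) (gm d) :=
    (integrable_const _).add (((integrable_const _).add (hint.const_mul _)).const_mul _)
  refine ⟨∫ ξ, (1 + 2 ^ θ * (1 + √T ^ θ * ‖ξ‖ ^ θ)) ∂(gm d),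
    integral_nonneg fun ξ => by positivity, fun x₀ x t ht => ?_⟩
  rw [← integral_mul_const]
  unfold PP
  refine integral_mono (PP_integrable hT hA ht (rho_cont d hθ x₀) (hAg x₀) x)
    (hint2.mul_const _) fun ξ => ?_
  simp only [rho]
  have h1 : ‖x + √t • ξ - x₀‖ ≤ ‖x - x₀‖ + √T * ‖ξ‖ := by
    rw [show x + √t • ξ - x₀ = (x - x₀) + √t • ξ by abel]
    refine (norm_add_le _ _).trans ?_
    rw [norm_smul, Real.norm_eq_abs, abs_of_nonneg (Real.sqrt_nonneg _)]
    gcongr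
  have h2 : ‖x + √t • ξ - x₀‖ ^ θ ≤ (‖x - x₀‖ + √T * ‖ξ‖) ^ θ := by gcongr
  have h3 := add_rpow_le hθ (norm_nonneg (x - x₀)) (b := √T * ‖ξ‖) (by positivity)
  rw [Real.mul_rpow (by positivity) (by positivity)] at h3
  have e1 : 0 ≤ ‖x - x₀‖ ^ θ := by positivity
  have e2 : 0 ≤ √T ^ θ * ‖ξ‖ ^ θ := by positivity
  have e3 : (0 : ℝ) ≤ 2 ^ θ := by positivity
  generalize ‖x - x₀‖ ^ θ = p at *
  generalize √T ^ θ * ‖ξ‖ ^ θ = q at *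
  generalize (2 : ℝ) ^ θ = r at *
  have e4 := mul_nonneg e3 e1
  have e5 := mul_nonneg e3 e2
  have e6 := mul_nonneg e5 e1
  nlinarith

lemma rho_lower (d : ℕ) {θ T : ℝ} (hθ : 0 < θ) (hT : 0 < T) (x₀ x : EuclideanSpace ℝ (Fin d))
    {t : ℝ} (ht : t ≤ T) : rho d θ x₀ x ≤ 2 * PP d t (rho d θ x₀) x := by
  obtain ⟨A, hA, hAg⟩ := rho_growth d hθ hT
  have hi := PP_integrable hT hA ht (rho_cont d hθ x₀) (hAg x₀) x
  have hrc := rho_cont d hθ x₀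
  have hm : AEMeasurable (fun y : EuclideanSpace ℝ (Fin d) => (-1 : ℝ) • y) (gm d) := by fun_prop
  have hsm : AEStronglyMeasurable (fun ξ => rho d θ x₀ (x + √t • ξ))
      ((gm d).map (fun x => (-1 : ℝ) • x)) := Continuous.aestronglyMeasurable (by fun_prop)
  have hi' : Integrable (fun ξ => rho d θ x₀ (x + √t • ((-1 : ℝ) • ξ))) (gm d) := by
    have := hi
    rw [← gm_neg, integrable_map_measure hsm hm] at this
    exact this
  have he : PP d t (rho d θ x₀) x = ∫ ξ, rho d θ x₀ (x + √t • ((-1 : ℝ) • ξ)) ∂(gm d) := by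
    unfold PP
    conv_lhs => rw [← gm_neg]
    rw [integral_map hm hsm]
  have h2 : 2 * PP d t (rho d θ x₀) x =
      ∫ ξ, (rho d θ x₀ (x + √t • ξ) + rho d θ x₀ (x + √t • ((-1 : ℝ) • ξ))) ∂(gm d) := by
    rw [integral_add hi hi', ← he, two_mul]
    rfl
  rw [h2]
  have h3 : rho d θ x₀ x = ∫ ξ, rho d θ x₀ x ∂(gm d) := by simp
  rw [h3]
  refine integral_mono (integrable_const _) (hi.add hi') fun ξ => ?_
  simp only [rho]
  set p := x + √t • ξ - x₀ with hp
  set q := x + √t • ((-1 : ℝ) • ξ) - x₀ with hq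
  have hpq : p + q = (2 : ℝ) • (x - x₀) := by
    rw [hp, hq]; module
  have hn : 2 * ‖x - x₀‖ ≤ ‖p‖ + ‖q‖ := by
    have := norm_add_le p q
    rw [hpq, norm_smul] at this
    simpa using this
  have e1 : 0 ≤ ‖p‖ ^ θ := by positivity
  have e2 : 0 ≤ ‖q‖ ^ θ := by positivity
  rcases le_total ‖p‖ ‖q‖ with h | h
  · have : ‖x - x₀‖ ^ θ ≤ ‖q‖ ^ θ := by gcongr; linarith
    linarith
  · have : ‖x - x₀‖ ^ θ ≤ ‖p‖ ^ θ := by gcongr; linarith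
    linarith

end HeatLip

namespace HeatLip

open MeasureTheory

lemma PP_zero (d : ℕ) (g : EuclideanSpace ℝ (Fin d) → ℝ) (x : EuclideanSpace ℝ (Fin d)) :
    PP d 0 g x = g x := by
  unfold PP; simp

/-- The small-time tail is negligible. -/
lemma tail_small {d : ℕ} {T δ ε : ℝ} (hT : 0 < T) (hδ : 0 < δ) (hε : 0 < ε)
    (x₀ x : EuclideanSpace ℝ (Fin d)) :
    ∃ η > 0, ∀ r, 0 ≤ r → r ≤ T → r < η →
      PP d r (fun y => min 1 (‖y - x‖ / δ) * Real.exp (‖y - x₀‖ ^ 2 / (8 * T))) x < ε := by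
  generalize hg : (fun y : EuclideanSpace ℝ (Fin d) =>
    min 1 (‖y - x‖ / δ) * Real.exp (‖y - x₀‖ ^ 2 / (8 * T))) = g
  have hc : Continuous g := by
    rw [← hg]; fun_prop
  have hgr : ∀ y, |g y| ≤ 1 * Real.exp (‖y - x₀‖ ^ 2 / (8 * T)) := by
    intro y
    rw [← hg]
    simp only
    rw [abs_mul, Real.abs_exp]
    gcongr
    rw [abs_of_nonneg (by positivity)]
    exact min_le_left _ _
  have h := PP_contOn hT zero_le_one hc hgr (0, x) (by simp [hT.le])
  have h0 : PP d 0 g x < ε := by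
    rw [PP_zero]; simp [← hg, hε]
  have h1 := h.eventually_lt_const (u := ε) h0
  obtain ⟨η, hη, hs⟩ := Metric.mem_nhdsWithin_iff.1 h1
  refine ⟨η, hη, fun r h0 hr hr2 => ?_⟩
  have : (r, x) ∈ Metric.ball ((0 : ℝ), x) η ∩ Set.Iic T ×ˢ Set.univ := by
    refine ⟨?_, by simpa using hr⟩
    simp [Prod.dist_eq, abs_of_nonneg h0, hr2, hη]
  exact hs this


end HeatLip

namespace HeatLip

open MeasureTheory

lemma max_attained {d : ℕ} {T θ N l : ℝ} (hN : 0 ≤ N) (hl0 : 0 < l)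
    {x₀ : EuclideanSpace ℝ (Fin d)} {V ρ : ℝ → EuclideanSpace ℝ (Fin d) → ℝ}
    (hV : memC d T θ x₀ V)
    (hρc : ContinuousOn (fun p : ℝ × EuclideanSpace ℝ (Fin d) => ρ p.1 p.2)
      (Set.Iic T ×ˢ Set.univ))
    (hρlow : ∀ t ≤ T, ∀ x, rho d θ x₀ x ≤ 2 * ρ t x) (hρpos : ∀ t ≤ T, ∀ x, 0 < ρ t x)
    {t₁ : ℝ} (ht₁ : t₁ ∈ Set.Icc 0 T) {x₁ : EuclideanSpace ℝ (Fin d)}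
    (h₁ : 2 * N * (Real.exp (l * t₁) * ρ t₁ x₁) < V t₁ x₁) :
    ∃ M, 2 * N < M ∧ ∃ ts ∈ Set.Icc 0 T, ∃ xs,
      (∀ t ∈ Set.Icc 0 T, ∀ x, V t x ≤ M * (Real.exp (l * t) * ρ t x)) ∧
      V ts xs = M * (Real.exp (l * ts) * ρ ts xs) := by
  obtain ⟨q, hq⟩ : ∃ q : ℝ × EuclideanSpace ℝ (Fin d) → ℝ,
    q = fun p => V p.1 p.2 / (Real.exp (l * p.1) * ρ p.1 p.2) := ⟨_, rfl⟩
  have hqc : ContinuousOn q (Set.Icc 0 T ×ˢ Set.univ) := by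
    rw [hq]
    refine hV.1.div (ContinuousOn.mul (Continuous.continuousOn (by fun_prop))
      (hρc.mono (Set.prod_mono Set.Icc_subset_Iic_self le_rfl))) ?_
    rintro ⟨t, x⟩ hp
    have := hρpos t hp.1.2 x
    positivity
  have hm1 : 2 * N < q (t₁, x₁) := by
    have := hρpos t₁ ht₁.2 x₁
    rw [hq]
    simp only
    rw [lt_div_iff₀ (by positivity)]
    exact h₁
  generalize hm : q (t₁, x₁) = m at *
  have hmpos : 0 < m := by linarith
  obtain ⟨R, hR⟩ := hV.2 (m / 2) (by positivity)
  have hfar : ∀ t ∈ Set.Icc 0 T, ∀ x, R ≤ ‖x‖ → q (t, x) ≤ m := by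
    intro t ht x hx
    have h2 := hR x hx t ht
    have hp := hρpos t ht.2 x
    have hlow := hρlow t ht.2 x
    have hr := rho_pos d θ x₀ x
    change _ / rho d θ x₀ x < _ at h2
    rw [div_lt_iff₀ hr] at h2
    rw [hq]
    simp only
    rw [div_le_iff₀ (by positivity)]
    have he : 1 ≤ Real.exp (l * t) := Real.one_le_exp (mul_nonneg (by linarith) ht.1)
    calc V t x ≤ |V t x| := le_abs_self _
      _ ≤ m / 2 * (2 * ρ t x) := h2.le.trans (by gcongr)
      _ = m * (1 * ρ t x) := by ring
      _ ≤ _ := by gcongr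
  have hK : IsCompact (Set.Icc 0 T ×ˢ Metric.closedBall (0 : EuclideanSpace ℝ (Fin d))
      (max R ‖x₁‖)) := isCompact_Icc.prod (isCompact_closedBall _ _)
  obtain ⟨⟨ts, xs⟩, hps, hmax⟩ := hK.exists_isMaxOn
    ⟨(t₁, x₁), ht₁, by simp⟩ (hqc.mono (Set.prod_mono le_rfl (Set.subset_univ _)))
  have hmM : q (t₁, x₁) ≤ q (ts, xs) := hmax (a := (t₁, x₁)) ⟨ht₁, by simp⟩
  have hmax' : ∀ p ∈ Set.Icc 0 T ×ˢ Metric.closedBall (0 : EuclideanSpace ℝ (Fin d))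
      (max R ‖x₁‖), q p ≤ q (ts, xs) := fun p hp => hmax hp
  rw [hm] at hmM
  generalize hM : q (ts, xs) = M at *
  have hglob : ∀ t ∈ Set.Icc 0 T, ∀ x, q (t, x) ≤ M := by
    intro t ht x
    by_cases hx : R ≤ ‖x‖
    · exact (hfar t ht x hx).trans hmM
    · exact hmax' (t, x) ⟨ht, by simp; left; exact (not_le.1 hx).le⟩
  have hts : ts ∈ Set.Icc 0 T := hps.1
  have hMpos : 0 < M := by linarith
  have hVle : ∀ t ∈ Set.Icc 0 T, ∀ x, V t x ≤ M * (Real.exp (l * t) * ρ t x) := by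
    intro t ht x
    have hp := hρpos t ht.2 x
    have := hglob t ht x
    rw [hq] at this
    simp only at this
    rwa [div_le_iff₀ (by positivity)] at this
  have hVeq : V ts xs = M * (Real.exp (l * ts) * ρ ts xs) := by
    have hp := hρpos ts hts.2 xs
    rw [← hM, hq]
    simp only
    rw [div_mul_cancel₀ _ (by positivity)]
  exact ⟨M, by linarith, ts, hts, xs, hVle, hVeq⟩

lemma tail_fun {d : ℕ} {T δ ε : ℝ} (hT : 0 < T) (hδ : 0 < δ) (hε : 0 < ε)
    (x₀ x : EuclideanSpace ℝ (Fin d)) :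
    ∃ g : EuclideanSpace ℝ (Fin d) → ℝ, Continuous g ∧ (∀ y, 0 ≤ g y) ∧
      (∀ y, |g y| ≤ 1 * Real.exp (‖y - x₀‖ ^ 2 / (8 * T))) ∧
      (∀ y, δ ≤ ‖y - x‖ → g y = Real.exp (‖y - x₀‖ ^ 2 / (8 * T))) ∧
      ∃ η > 0, ∀ r, 0 ≤ r → r ≤ T → r < η → PP d r g x < ε := by
  have hg0 : ∀ y : EuclideanSpace ℝ (Fin d),
      0 ≤ min 1 (‖y - x‖ / δ) * Real.exp (‖y - x₀‖ ^ 2 / (8 * T)) := fun y => by positivity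
  refine ⟨fun y => min 1 (‖y - x‖ / δ) * Real.exp (‖y - x₀‖ ^ 2 / (8 * T)), by fun_prop, hg0,
    fun y => ?_, fun y hy => ?_, tail_small hT hδ hε x₀ x⟩
  · rw [abs_of_nonneg (hg0 y)]
    gcongr
    exact min_le_left _ _
  · simp only
    rw [min_eq_left, one_mul]
    rwa [le_div_iff₀ hδ, one_mul]

lemma choose_h {δ η ts l : ℝ} (hδ : 0 < δ) (hη : 0 < η) (hts0 : 0 < ts) (hl1 : 0 < l) :
    ∃ h : ℝ, 0 < h ∧ h < δ ∧ h < η ∧ h < ts ∧ l ^ 2 * h ≤ 1 / 2 := by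
  refine ⟨min (min δ η) (min ts (1 / l ^ 2)) / 2, by positivity, ?_, ?_, ?_, ?_⟩
  · have : min (min δ η) (min ts (1 / l ^ 2)) ≤ δ := (min_le_left _ _).trans (min_le_left _ _)
    linarith
  · have : min (min δ η) (min ts (1 / l ^ 2)) ≤ η := (min_le_left _ _).trans (min_le_right _ _)
    linarith
  · have : min (min δ η) (min ts (1 / l ^ 2)) ≤ ts := (min_le_right _ _).trans (min_le_left _ _)
    linarith
  · have : min (min δ η) (min ts (1 / l ^ 2)) ≤ 1 / l ^ 2 :=
      (min_le_right _ _).trans (min_le_right _ _)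
    calc l ^ 2 * (min (min δ η) (min ts (1 / l ^ 2)) / 2) ≤ l ^ 2 * (1 / l ^ 2 / 2) := by gcongr
      _ = 1 / 2 := by field_simp

lemma nbhd_lt {d : ℕ} {T : ℝ} {V : ℝ → EuclideanSpace ℝ (Fin d) → ℝ}
    {R : EuclideanSpace ℝ (Fin d) → ℝ} (hR : Continuous R)
    (hV : ContinuousOn (fun p : ℝ × EuclideanSpace ℝ (Fin d) => V p.1 p.2)
      (Set.Icc 0 T ×ˢ Set.univ)) {ts : ℝ} {xs : EuclideanSpace ℝ (Fin d)}
    (hts : ts ∈ Set.Icc 0 T) (hnb : R xs < V ts xs) :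
    ∃ δ > 0, ∀ s y, s ∈ Set.Icc 0 T → |s - ts| < δ → ‖y - xs‖ < δ → R y < V s y := by
  have hev : ∀ᶠ p in nhdsWithin (ts, xs) (Set.Icc 0 T ×ˢ Set.univ), R p.2 < V p.1 p.2 := by
    have c1 : ContinuousWithinAt (fun p : ℝ × EuclideanSpace ℝ (Fin d) => R p.2)
      (Set.Icc 0 T ×ˢ Set.univ) (ts, xs) := Continuous.continuousWithinAt (by fun_prop)
    have c2 := hV (ts, xs) ⟨hts, Set.mem_univ _⟩
    exact c1.eventually_lt c2 hnb
  obtain ⟨δ, hδ, hball⟩ := Metric.mem_nhdsWithin_iff.1 hev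
  refine ⟨δ, hδ, fun s y hsI h1 h2 => ?_⟩
  have hmem : (s, y) ∈ Metric.ball (ts, xs) δ ∩ Set.Icc 0 T ×ˢ Set.univ := by
    refine ⟨?_, hsI, Set.mem_univ _⟩
    rw [Metric.mem_ball, Prod.dist_eq, max_lt_iff, Real.dist_eq, dist_eq_norm]
    exact ⟨h1, h2⟩
  exact hball hmem

set_option maxHeartbeats 1000000 in
lemma core_abs {d : ℕ} {T A θ κ N l : ℝ} (hT : 0 < T) (hA : 0 ≤ A) (hκ : 0 ≤ κ) (hN : 0 ≤ N)
    (hθ : 0 < θ) (hl : l = 2 * κ + 1)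
    {x₀ : EuclideanSpace ℝ (Fin d)} {f ρ : ℝ → EuclideanSpace ℝ (Fin d) → ℝ}
    (hc : Continuous (Function.uncurry f))
    (hg : ∀ s y, |f s y| ≤ A * Real.exp (‖y - x₀‖ ^ 2 / (8 * T)))
    (hV : memC d T θ x₀ (VV d f))
    (hf : ∀ t ∈ Set.Icc 0 T, ∀ x, N * rho d θ x₀ x < VV d f t x →
      f t x ≤ κ * (VV d f t x + N * rho d θ x₀ x))
    (hρlow : ∀ t ≤ T, ∀ x, rho d θ x₀ x ≤ 2 * ρ t x) (hρpos : ∀ t ≤ T, ∀ x, 0 < ρ t x)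
    (hρint : ∀ s ≤ T, ∀ a ≤ T, ∀ x, Integrable (fun ξ => ρ s (x + √a • ξ)) (gm d))
    (hρsg : ∀ a b, 0 ≤ a → 0 ≤ b → a + b ≤ T → ∀ x, PP d a (ρ b) x = ρ (a + b) x)
    {M ts : ℝ} {xs : EuclideanSpace ℝ (Fin d)} (hNM : 2 * N < M) (hts : ts ∈ Set.Icc 0 T)
    (hVle : ∀ t ∈ Set.Icc 0 T, ∀ x, VV d f t x ≤ M * (Real.exp (l * t) * ρ t x))
    (hVeq : VV d f ts xs = M * (Real.exp (l * ts) * ρ ts xs)) : False := by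
  have hl0 : 0 < l := by linarith
  have hMpos : 0 < M := by linarith
  have hrc := rho_cont d hθ x₀
  have hRpos := hρpos ts hts.2 xs
  obtain ⟨a, ha⟩ : ∃ a, a = M * Real.exp (l * ts) := ⟨_, rfl⟩
  have hapos : 0 < a := by rw [ha]; positivity
  have hts0 : 0 < ts := by
    rcases hts.1.eq_or_lt with h | h
    · exfalso
      have h0 : VV d f ts xs = 0 := by
        rw [← h]; simp [VV]
      rw [h0] at hVeq
      have : 0 < M * (Real.exp (l * ts) * ρ ts xs) := by positivity
      linarith
    · exact h
  -- neighbourhood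
  have hnb : N * rho d θ x₀ xs < VV d f ts xs := by
    rw [hVeq]
    have he : 1 ≤ Real.exp (l * ts) := Real.one_le_exp (mul_nonneg (by linarith) hts.1)
    calc N * rho d θ x₀ xs ≤ N * (2 * ρ ts xs) := by
          gcongr; exact hρlow ts hts.2 xs
      _ = 2 * N * (1 * ρ ts xs) := by ring
      _ < M * (1 * ρ ts xs) := by gcongr
      _ ≤ _ := by gcongr
  obtain ⟨δ, hδ, hball⟩ := nbhd_lt (R := fun y => N * rho d θ x₀ y) (by fun_prop) hV.1 hts hnb
  obtain ⟨g, hgc, hg0, hgr, hgout, η, hη, htail⟩ := tail_fun hT hδ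
    (ε := a * ρ ts xs / (4 * (A + 1))) (by positivity) x₀ xs
  obtain ⟨h, hh0, hhδ, hhη, hhts, hhl⟩ := choose_h hδ hη hts0 hl0
  -- pointwise source bound
  have hfb : ∀ s ∈ Set.Ioc (ts - h) ts, ∀ y, f s y ≤ 2 * κ * a * ρ s y + A * g y := by
    intro s hs y
    have hsI : s ∈ Set.Icc 0 T := ⟨by linarith [hs.1], hs.2.trans hts.2⟩
    have hp := hρpos s hsI.2 y
    by_cases hy : ‖y - xs‖ < δ
    · have hlt : N * rho d θ x₀ y < VV d f s y :=
        hball s y hsI (by rw [abs_lt]; constructor <;> linarith [hs.1, hs.2]) hy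
      have h1 := hf s hsI y hlt
      have h2 : VV d f s y ≤ a * ρ s y := by
        refine (hVle s hsI y).trans ?_
        rw [ha, ← mul_assoc]
        gcongr
        exact hs.2
      have h3 : κ * (VV d f s y + N * rho d θ x₀ y) ≤ κ * (a * ρ s y + a * ρ s y) := by
        refine mul_le_mul_of_nonneg_left ?_ hκ
        linarith
      have h4 := mul_nonneg hA (hg0 y)
      linarith
    · have h1 := hgout y (not_lt.1 hy)
      have h2 := (le_abs_self _).trans (hg s y)
      rw [h1]
      have : 0 ≤ 2 * κ * a * ρ s y := by positivity
      linarith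
  have hcs : ∀ s, Continuous (f s) := by
    intro s
    have : f s = fun y => Function.uncurry f (s, y) := rfl
    rw [this]; fun_prop
  have hPb : ∀ s ∈ Set.Ioc (ts - h) ts, PP d (ts - s) (f s) xs ≤
      2 * κ * (a * ρ ts xs) + a * ρ ts xs / 4 := by
    intro s hs
    have hs0 : 0 ≤ s := by linarith [hs.1]
    have hsT : s ≤ T := hs.2.trans hts.2
    have hr0 : 0 ≤ ts - s := by linarith [hs.2]
    have hrT : ts - s ≤ T := by linarith [hts.2]
    have i1 := (hρint s hsT (ts - s) hrT xs).const_mul (2 * κ * a)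
    have i2 := (PP_integrable hT zero_le_one hrT hgc hgr xs).const_mul A
    have h1 : PP d (ts - s) (f s) xs ≤
        2 * κ * a * PP d (ts - s) (ρ s) xs + A * PP d (ts - s) g xs := by
      unfold PP
      rw [← integral_const_mul, ← integral_const_mul, ← integral_add i1 i2]
      exact integral_mono (PP_integrable hT hA hrT (hcs s) (hg s) xs) (i1.add i2)
        fun ξ => hfb s hs _
    rw [hρsg _ _ hr0 hs0 (by linarith [hts.2]), sub_add_cancel] at h1
    have h2 := htail (ts - s) hr0 hrT (by linarith [hs.1])
    have h3 : A * PP d (ts - s) g xs ≤ a * ρ ts xs / 4 := by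
      calc A * PP d (ts - s) g xs ≤ A * (a * ρ ts xs / (4 * (A + 1))) := by gcongr
        _ ≤ (A + 1) * (a * ρ ts xs / (4 * (A + 1))) := by gcongr; linarith
        _ = a * ρ ts xs / 4 := by field_simp
    linarith
  -- Duhamel splitting
  obtain ⟨j1, j2⟩ := VV_semigroup hT hA hc hg (t := ts - h) hh0.le (by linarith [hts.2]) xs
  rw [sub_add_cancel] at j2
  have hsplit : VV d f ts xs = ∫ ξ, VV d f (ts - h) (xs + √h • ξ) ∂(gm d) +
      ∫ s in Set.Ioc (ts - h) ts, PP d (ts - s) (f s) xs := by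
    rw [j2]
    unfold VV
    rw [← setIntegral_union (Set.Ioc_disjoint_Ioc_of_le le_rfl) measurableSet_Ioc
      (time_integrable hT hA hc hg hts.2 le_rfl xs)
      (time_integrable hT hA hc hg hts.2 (by linarith) xs),
      Set.Ioc_union_Ioc_eq_Ioc (by linarith) (by linarith)]
  have hfirst : ∫ ξ, VV d f (ts - h) (xs + √h • ξ) ∂(gm d) ≤
      M * Real.exp (l * (ts - h)) * ρ ts xs := by
    have hI : ts - h ∈ Set.Icc 0 T := ⟨by linarith, by linarith [hts.2]⟩
    have hhT : h ≤ T := by linarith [hts.2]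
    have e := hρsg h (ts - h) hh0.le hI.1 (by linarith [hts.2]) xs
    rw [add_sub_cancel] at e
    rw [← e]
    unfold PP
    rw [← integral_const_mul]
    refine integral_mono j1 ((hρint _ hI.2 h hhT xs).const_mul _) fun ξ => ?_
    have := hVle _ hI (xs + √h • ξ)
    simp only
    linarith
  have hsecond : ∫ s in Set.Ioc (ts - h) ts, PP d (ts - s) (f s) xs ≤
      h * (2 * κ * (a * ρ ts xs) + a * ρ ts xs / 4) := by
    have := setIntegral_mono_on (time_integrable hT hA hc hg hts.2 (by linarith) xs)
      (integrableOn_const (by simp) (by simp)) measurableSet_Ioc hPb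
    refine this.trans (le_of_eq ?_)
    simp [hh0.le]
  have hexp : Real.exp (l * (ts - h)) ≤ Real.exp (l * ts) * (1 - h * (l - 1 / 2)) := by
    rw [show l * (ts - h) = l * ts + -(l * h) by ring, Real.exp_add]
    gcongr
    rw [Real.exp_neg]
    have h1 := Real.add_one_le_exp (l * h)
    have hlh : 0 < l * h := by have : 0 < l := by linarith
                               positivity
    have h2 : (Real.exp (l * h))⁻¹ ≤ (l * h + 1)⁻¹ := by gcongr
    refine h2.trans ?_
    rw [inv_le_iff_one_le_mul₀ (by positivity)]
    nlinarith
  have hfin : M * Real.exp (l * (ts - h)) * ρ ts xs ≤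
      a * ρ ts xs * (1 - h * (l - 1 / 2)) := by
    calc M * Real.exp (l * (ts - h)) * ρ ts xs ≤
        M * (Real.exp (l * ts) * (1 - h * (l - 1 / 2))) * ρ ts xs := by gcongr
      _ = _ := by rw [ha]; ring
  have hV2 : VV d f ts xs = a * ρ ts xs := by rw [hVeq, ha]; ring
  have hpos : 0 < h * (a * ρ ts xs) := by positivity
  have : a * ρ ts xs ≤ a * ρ ts xs * (1 - h * (l - 1 / 2)) +
    h * (2 * κ * (a * ρ ts xs) + a * ρ ts xs / 4) := by linarith
  rw [hl] at this
  nlinarith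

lemma core {d : ℕ} {T A θ κ N : ℝ} (hT : 0 < T) (hA : 0 ≤ A) (hθ : 0 < θ) (hκ : 0 ≤ κ) (hN : 0 ≤ N)
    {x₀ : EuclideanSpace ℝ (Fin d)} {f : ℝ → EuclideanSpace ℝ (Fin d) → ℝ}
    (hc : Continuous (Function.uncurry f))
    (hg : ∀ s y, |f s y| ≤ A * Real.exp (‖y - x₀‖ ^ 2 / (8 * T)))
    (hV : memC d T θ x₀ (VV d f))
    (hf : ∀ t ∈ Set.Icc 0 T, ∀ x, N * rho d θ x₀ x < VV d f t x →
      f t x ≤ κ * (VV d f t x + N * rho d θ x₀ x)) :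
    ∀ t ∈ Set.Icc 0 T, ∀ x, VV d f t x ≤
      2 * N * (Real.exp ((2 * κ + 1) * t) * PP d t (rho d θ x₀) x) := by
  obtain ⟨A₁, hA₁, hAg⟩ := rho_growth d hθ hT
  obtain ⟨C₁, hC₁, hup⟩ := rho_upper d hθ hT
  have hrc := rho_cont d hθ x₀
  let ρ : ℝ → EuclideanSpace ℝ (Fin d) → ℝ := fun t x => PP d t (rho d θ x₀) x
  have hρlow : ∀ t ≤ T, ∀ x, rho d θ x₀ x ≤ 2 * ρ t x := fun t ht x => rho_lower d hθ hT x₀ x ht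
  have hρpos : ∀ t ≤ T, ∀ x, 0 < ρ t x := fun t ht x => by
    have := hρlow t ht x
    have := rho_pos d θ x₀ x
    linarith
  have hρc := PP_contOn hT hA₁ hrc (hAg x₀)
  -- growth and semigroup of ρ
  have hρgr : ∀ s ≤ T, ∀ y, |ρ s y| ≤ C₁ * A₁ * Real.exp (‖y - x₀‖ ^ 2 / (8 * T)) := by
    intro s hs y
    rw [abs_of_pos (hρpos s hs y)]
    refine (hup x₀ y s hs).trans ?_
    rw [mul_assoc]
    gcongr
    exact (le_abs_self _).trans (hAg x₀ y)
  have hρcx : ∀ s ≤ T, Continuous (ρ s) := by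
    intro s hs
    rw [← continuousOn_univ]
    exact hρc.comp (f := fun y => (s, y)) (Continuous.continuousOn (by fun_prop))
      (fun y _ => ⟨hs, Set.mem_univ _⟩)
  have hρint : ∀ s ≤ T, ∀ a ≤ T, ∀ x, Integrable (fun ξ => ρ s (x + √a • ξ)) (gm d) :=
    fun s hs a ha x => PP_integrable hT (by positivity) ha (hρcx s hs) (hρgr s hs) x
  have hρsg : ∀ a b, 0 ≤ a → 0 ≤ b → a + b ≤ T → ∀ x, PP d a (ρ b) x = ρ (a + b) x := by
    intro a b ha hb hab x
    exact PP_semigroup d ha hb (rho d θ x₀) hrc x (PP_integrable hT hA₁ hab hrc (hAg x₀) x)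
  by_contra hcon
  push Not at hcon
  obtain ⟨t₁, ht₁, x₁, h₁⟩ := hcon
  obtain ⟨M, hNM, ts, hts, xs, hVle, hVeq⟩ := max_attained (ρ := ρ) hN
    (l := 2 * κ + 1) (by positivity) hV hρc hρlow hρpos ht₁ h₁
  exact core_abs hT hA hκ hN hθ rfl hc hg hV hf hρlow hρpos hρint hρsg hNM hts hVle hVeq

end HeatLip

namespace HeatLip

open MeasureTheory

lemma young_rpow {γ ε : ℝ} (hγ0 : 0 ≤ γ) (hγ : γ < 2) (hε : 0 < ε) :
    ∃ C : ℝ, 0 ≤ C ∧ ∀ n : ℝ, 0 ≤ n → n ^ γ ≤ ε * n ^ 2 + C := by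
  set L := ε ^ (1 / (γ - 2)) with hL
  have hLpos : 0 < L := by positivity
  refine ⟨L ^ γ, by positivity, fun n hn => ?_⟩
  rcases le_total n L with h | h
  · have : n ^ γ ≤ L ^ γ := by gcongr
    have h2 : 0 ≤ ε * n ^ 2 := by positivity
    linarith
  · have hn0 : 0 < n := lt_of_lt_of_le hLpos h
    have h1 : n ^ (γ - 2) ≤ L ^ (γ - 2) :=
      Real.rpow_le_rpow_of_nonpos hLpos h (by linarith)
    have h2 : L ^ (γ - 2) = ε := by
      rw [hL, ← Real.rpow_mul hε.le, one_div, inv_mul_cancel₀ (by linarith), Real.rpow_one]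
    have h3 : n ^ γ = n ^ (γ - 2) * n ^ 2 := by
      rw [← Real.rpow_natCast n 2, ← Real.rpow_add hn0]
      congr 1
      push_cast
      ring
    rw [h3]
    have h4 : 0 ≤ L ^ γ := by positivity
    have : n ^ (γ - 2) * n ^ 2 ≤ ε * n ^ 2 := by gcongr; linarith
    linarith

lemma memC_bdd {d : ℕ} {T θ : ℝ} {x₀ : EuclideanSpace ℝ (Fin d)}
    {z : ℝ → EuclideanSpace ℝ (Fin d) → ℝ} (hz : memC d T θ x₀ z) :
    ∃ B : ℝ, 0 ≤ B ∧ ∀ t ∈ Set.Icc 0 T, ∀ x, |z t x| ≤ B * rho d θ x₀ x := by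
  obtain ⟨R, hR⟩ := hz.2 1 one_pos
  have hK : IsCompact (Set.Icc 0 T ×ˢ Metric.closedBall (0 : EuclideanSpace ℝ (Fin d)) R) :=
    isCompact_Icc.prod (isCompact_closedBall _ _)
  obtain ⟨B, hB⟩ := hK.exists_bound_of_continuousOn
    (hz.1.mono (Set.prod_mono le_rfl (Set.subset_univ _)))
  refine ⟨|B| + 1, by positivity, fun t ht x => ?_⟩
  have h1 := rho_one_le d θ x₀ x
  have hp := rho_pos d θ x₀ x
  by_cases hx : R ≤ ‖x‖
  · have h2 := hR x hx t ht
    change _ / rho d θ x₀ x < _ at h2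
    rw [div_lt_iff₀ hp] at h2
    have := mul_nonneg (abs_nonneg B) hp.le
    linarith
  · have h2 := hB (t, x) ⟨ht, by simpa using (not_le.1 hx).le⟩
    rw [Real.norm_eq_abs] at h2
    have h3 := le_abs_self B
    simp only at h2
    nlinarith [abs_nonneg B]

lemma memC_sub {d : ℕ} {T θ : ℝ} {x₀ : EuclideanSpace ℝ (Fin d)}
    {z z' : ℝ → EuclideanSpace ℝ (Fin d) → ℝ} (hz : memC d T θ x₀ z) (hz' : memC d T θ x₀ z') :
    memC d T θ x₀ (fun t x => z t x - z' t x) := by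
  refine ⟨hz.1.sub hz'.1, fun ε hε => ?_⟩
  obtain ⟨R, hR⟩ := hz.2 (ε / 2) (by positivity)
  obtain ⟨R', hR'⟩ := hz'.2 (ε / 2) (by positivity)
  refine ⟨max R R', fun x hx t ht => ?_⟩
  have h1 := hR x ((le_max_left _ _).trans hx) t ht
  have h2 := hR' x ((le_max_right _ _).trans hx) t ht
  calc |z t x - z' t x| / (1 + ‖x - x₀‖ ^ θ) ≤ (|z t x| + |z' t x|) / (1 + ‖x - x₀‖ ^ θ) := by
        gcongr; exact abs_sub _ _
    _ = |z t x| / (1 + ‖x - x₀‖ ^ θ) + |z' t x| / (1 + ‖x - x₀‖ ^ θ) := add_div _ _ _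
    _ < ε := by linarith

lemma memC_congr {d : ℕ} {T θ : ℝ} {x₀ : EuclideanSpace ℝ (Fin d)}
    {z z' : ℝ → EuclideanSpace ℝ (Fin d) → ℝ} (hz : memC d T θ x₀ z)
    (h : ∀ t ∈ Set.Icc 0 T, ∀ x, z' t x = z t x) : memC d T θ x₀ z' := by
  refine ⟨hz.1.congr fun p hp => h p.1 hp.1 p.2, fun ε hε => ?_⟩
  obtain ⟨R, hR⟩ := hz.2 ε hε
  refine ⟨R, fun x hx t ht => ?_⟩
  rw [h t ht x]
  exact hR x hx t ht

lemma wNorm_le {d : ℕ} {T θ B : ℝ} {x₀ : EuclideanSpace ℝ (Fin d)}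
    {z : ℝ → EuclideanSpace ℝ (Fin d) → ℝ} (hB : 0 ≤ B)
    (h : ∀ t ∈ Set.Icc 0 T, ∀ x, |z t x| ≤ B * rho d θ x₀ x) : wNorm d T θ x₀ z ≤ B := by
  refine Real.iSup_le (fun t => Real.iSup_le (fun x => ?_) hB) hB
  have := h t.1 t.2 x
  change _ / rho d θ x₀ x ≤ _
  rwa [div_le_iff₀ (rho_pos d θ x₀ x)]

lemma le_wNorm {d : ℕ} {T θ : ℝ} {x₀ : EuclideanSpace ℝ (Fin d)}
    {z : ℝ → EuclideanSpace ℝ (Fin d) → ℝ} (hz : memC d T θ x₀ z) :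
    ∀ t ∈ Set.Icc 0 T, ∀ x, |z t x| ≤ wNorm d T θ x₀ z * rho d θ x₀ x := by
  obtain ⟨B, hB, h⟩ := memC_bdd hz
  intro t ht x
  have hd : ∀ t : Set.Icc (0 : ℝ) T, ∀ x, |z t.1 x| / (1 + ‖x - x₀‖ ^ θ) ≤ B := by
    intro t x
    change _ / rho d θ x₀ x ≤ _
    rw [div_le_iff₀ (rho_pos d θ x₀ x)]
    exact h t.1 t.2 x
  rw [← div_le_iff₀ (rho_pos d θ x₀ x)]
  have h1 : |z t x| / (1 + ‖x - x₀‖ ^ θ) ≤ ⨆ x, |z t x| / (1 + ‖x - x₀‖ ^ θ) :=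
    le_ciSup (f := fun x => |z t x| / (1 + ‖x - x₀‖ ^ θ))
      ⟨B, by rintro _ ⟨y, rfl⟩; exact hd ⟨t, ht⟩ y⟩ x
  have h2 : (⨆ x, |z t x| / (1 + ‖x - x₀‖ ^ θ)) ≤ wNorm d T θ x₀ z :=
    le_ciSup (f := fun t : Set.Icc (0 : ℝ) T => ⨆ x, |z t.1 x| / (1 + ‖x - x₀‖ ^ θ))
      ⟨B, by rintro _ ⟨y, rfl⟩; exact Real.iSup_le (hd y) hB⟩ ⟨t, ht⟩
  exact h1.trans h2

lemma wNorm_nonneg {d : ℕ} {T θ : ℝ} {x₀ : EuclideanSpace ℝ (Fin d)}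
    {z : ℝ → EuclideanSpace ℝ (Fin d) → ℝ} : 0 ≤ wNorm d T θ x₀ z :=
  Real.iSup_nonneg fun t => Real.iSup_nonneg fun x => by positivity

lemma src_growth {d : ℕ} {T K β ν θ : ℝ} (hT : 0 < T) (hK : 0 < K) (hβ : β ∈ Set.Ico (0 : ℝ) 2)
    (hν : 0 < ν) (hθ : θ ∈ Set.Ioo (0 : ℝ) (2 / ν)) {x₀ : EuclideanSpace ℝ (Fin d)}
    {φ : ℝ → EuclideanSpace ℝ (Fin d) → ℝ → ℝ}
    (hφ : ∀ t ∈ Set.Icc (0 : ℝ) T, ∀ (x : EuclideanSpace ℝ (Fin d)) (u : ℝ),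
          |φ t x u| ≤ K * Real.exp (K * (‖x - x₀‖ ^ β + |u| ^ ν)))
    {w : ℝ → EuclideanSpace ℝ (Fin d) → ℝ} (hw : memC d T θ x₀ w) :
    ∃ A : ℝ, 0 ≤ A ∧ ∀ s ∈ Set.Icc 0 T, ∀ y,
      |φ s y (w s y)| ≤ A * Real.exp (‖y - x₀‖ ^ 2 / (8 * T)) := by
  obtain ⟨B, hB, hwB⟩ := memC_bdd hw
  set D := B ^ ν * 2 ^ ν + 1 with hD
  have hDpos : 0 < D := by positivity
  have hθν : θ * ν < 2 := by
    have := hθ.2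
    rwa [lt_div_iff₀ hν] at this
  obtain ⟨C₁, hC₁, h₁⟩ := young_rpow hβ.1 hβ.2 (ε := 1 / (16 * T * K)) (by positivity)
  obtain ⟨C₂, hC₂, h₂⟩ := young_rpow (mul_nonneg hθ.1.le hν.le) hθν
    (ε := 1 / (16 * T * K * D)) (by positivity)
  refine ⟨K * Real.exp (K * C₁ + K * D * (1 + C₂)), by positivity, fun s hs y => ?_⟩
  refine (hφ s hs y _).trans ?_
  rw [mul_assoc, ← Real.exp_add]
  gcongr
  set n := ‖y - x₀‖ with hn
  have hn0 : 0 ≤ n := norm_nonneg _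
  have e1 := h₁ n hn0
  have e2 := h₂ n hn0
  have e3 : |w s y| ^ ν ≤ D * (1 + n ^ (θ * ν)) := by
    calc |w s y| ^ ν ≤ (B * (1 + n ^ θ)) ^ ν := by
          gcongr; exact hwB s hs y
      _ = B ^ ν * (1 + n ^ θ) ^ ν := Real.mul_rpow hB (by positivity)
      _ ≤ B ^ ν * (2 ^ ν * (1 ^ ν + (n ^ θ) ^ ν)) := by
          gcongr
          exact add_rpow_le hν zero_le_one (by positivity)
      _ = B ^ ν * 2 ^ ν * (1 + n ^ (θ * ν)) := by
          rw [Real.one_rpow, ← Real.rpow_mul hn0]; ring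
      _ ≤ D * (1 + n ^ (θ * ν)) := by
          gcongr; linarith
  calc K * (n ^ β + |w s y| ^ ν) ≤ K * ((1 / (16 * T * K) * n ^ 2 + C₁) +
        D * (1 + (1 / (16 * T * K * D) * n ^ 2 + C₂))) := by
        gcongr
        exact e3.trans (by gcongr)
    _ = K * C₁ + K * D * (1 + C₂) + n ^ 2 / (8 * T) := by
        field_simp
        ring

/-- clamp time to `[0,T]` -/
noncomputable def cl (T s : ℝ) : ℝ := max 0 (min s T)

lemma cl_mem {T : ℝ} (hT : 0 < T) (s : ℝ) : cl T s ∈ Set.Icc 0 T :=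
  ⟨le_max_left _ _, max_le hT.le (min_le_right _ _)⟩

lemma cl_eq {T s : ℝ} (hs : s ∈ Set.Icc 0 T) : cl T s = s := by
  unfold cl; rw [min_eq_left hs.2, max_eq_right hs.1]

lemma cl_cont (T : ℝ) : Continuous (cl T) := by unfold cl; fun_prop

/-- the source term -/
noncomputable def src (d : ℕ) (T : ℝ) (φ : ℝ → EuclideanSpace ℝ (Fin d) → ℝ → ℝ)
    (w : ℝ → EuclideanSpace ℝ (Fin d) → ℝ) (s : ℝ) (y : EuclideanSpace ℝ (Fin d)) : ℝ :=
  φ (cl T s) y (w (cl T s) y)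

lemma src_cont {d : ℕ} {T : ℝ} (hT : 0 < T) {φ : ℝ → EuclideanSpace ℝ (Fin d) → ℝ → ℝ}
    (hφ : ContinuousOn (fun p : ℝ × EuclideanSpace ℝ (Fin d) × ℝ => φ p.1 p.2.1 p.2.2)
          (Set.Icc 0 T ×ˢ Set.univ ×ˢ Set.univ))
    {w : ℝ → EuclideanSpace ℝ (Fin d) → ℝ}
    (hw : ContinuousOn (fun p : ℝ × EuclideanSpace ℝ (Fin d) => w p.1 p.2)
      (Set.Icc 0 T ×ˢ Set.univ)) : Continuous (Function.uncurry (src d T φ w)) := by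
  have hc := cl_cont T
  have h1 : Continuous (fun p : ℝ × EuclideanSpace ℝ (Fin d) => w (cl T p.1) p.2) :=
    hw.comp_continuous (f := fun p : ℝ × EuclideanSpace ℝ (Fin d) => (cl T p.1, p.2))
      (by fun_prop) (fun p => ⟨cl_mem hT _, Set.mem_univ _⟩)
  exact hφ.comp_continuous
    (f := fun p : ℝ × EuclideanSpace ℝ (Fin d) => (cl T p.1, p.2, w (cl T p.1) p.2))
    ((hc.comp continuous_fst).prodMk (continuous_snd.prodMk h1)) (fun p => ⟨cl_mem hT _, Set.mem_univ _, Set.mem_univ _⟩)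

lemma kernel_eq_VV {d : ℕ} {T : ℝ} {φ : ℝ → EuclideanSpace ℝ (Fin d) → ℝ → ℝ}
    {w : ℝ → EuclideanSpace ℝ (Fin d) → ℝ} {t : ℝ} (ht : t ∈ Set.Icc 0 T)
    (x : EuclideanSpace ℝ (Fin d)) :
    (∫ s in Set.Ioc (0 : ℝ) t, ∫ y, heatKernel d (t - s) (x - y) * φ s y (w s y)) =
      VV d (src d T φ w) t x := by
  unfold VV
  refine integral_congr_ae ?_
  have hne : ∀ᵐ s ∂(volume.restrict (Set.Ioc (0 : ℝ) t)), s ≠ t :=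
    ae_restrict_of_ae (by simp [ae_iff, measure_singleton])
  filter_upwards [ae_restrict_mem measurableSet_Ioc, hne] with s hs hst
  rw [← PP_eq_kernel d (sub_pos.2 (lt_of_le_of_ne hs.2 hst))]
  unfold src
  rw [cl_eq ⟨hs.1.le, hs.2.trans ht.2⟩]

lemma VV_sub {d : ℕ} {T A A' : ℝ} (hT : 0 < T) (hA : 0 ≤ A) (hA' : 0 ≤ A')
    {x₀ : EuclideanSpace ℝ (Fin d)} {f f' : ℝ → EuclideanSpace ℝ (Fin d) → ℝ}
    (hc : Continuous (Function.uncurry f)) (hc' : Continuous (Function.uncurry f'))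
    (hg : ∀ s y, |f s y| ≤ A * Real.exp (‖y - x₀‖ ^ 2 / (8 * T)))
    (hg' : ∀ s y, |f' s y| ≤ A' * Real.exp (‖y - x₀‖ ^ 2 / (8 * T)))
    {t : ℝ} (ht : t ≤ T) (x : EuclideanSpace ℝ (Fin d)) :
    VV d (fun s y => f s y - f' s y) t x = VV d f t x - VV d f' t x := by
  unfold VV
  rw [← integral_sub (time_integrable hT hA hc hg ht le_rfl x)
    (time_integrable hT hA' hc' hg' ht le_rfl x)]
  refine setIntegral_congr_fun measurableSet_Ioc fun s hs => ?_
  have c1 : Continuous (f s) := hc.comp (f := fun y => (s, y)) (by fun_prop)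
  have c2 : Continuous (f' s) := hc'.comp (f := fun y => (s, y)) (by fun_prop)
  have hst : t - s ≤ T := by linarith [hs.1]
  exact integral_sub (PP_integrable hT hA hst c1 (hg s) x) (PP_integrable hT hA' hst c2 (hg' s) x)

lemma oneside {d : ℕ} {T : ℝ} (hT : 0 < T) {κ ν θ : ℝ} (hν : 0 < ν)
    (hθ : θ ∈ Set.Ioo (0 : ℝ) (2 / ν)) {K β : ℝ} (hK : 0 < K) (hβ : β ∈ Set.Ico (0 : ℝ) 2)
    {x₀ : EuclideanSpace ℝ (Fin d)} {φ : ℝ → EuclideanSpace ℝ (Fin d) → ℝ → ℝ}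
    (hφc : ContinuousOn (fun p : ℝ × EuclideanSpace ℝ (Fin d) × ℝ => φ p.1 p.2.1 p.2.2)
          (Set.Icc 0 T ×ˢ Set.univ ×ˢ Set.univ))
    (hφ : ∀ t ∈ Set.Icc (0 : ℝ) T, ∀ (x : EuclideanSpace ℝ (Fin d)) (u₁ u₂ : ℝ),
          u₂ < u₁ → φ t x u₁ - φ t x u₂ ≤ κ * (u₁ - u₂))
    (hφg : ∀ t ∈ Set.Icc (0 : ℝ) T, ∀ (x : EuclideanSpace ℝ (Fin d)) (u : ℝ),
          |φ t x u| ≤ K * Real.exp (K * (‖x - x₀‖ ^ β + |u| ^ ν)))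
    {z₁ z₂ w₁ w₂ : ℝ → EuclideanSpace ℝ (Fin d) → ℝ}
    (hz₁ : memC d T θ x₀ z₁) (hz₂ : memC d T θ x₀ z₂)
    (hw₁ : memC d T θ x₀ w₁) (hw₂ : memC d T θ x₀ w₂)
    (h₁ : ∀ t ∈ Set.Icc (0 : ℝ) T, ∀ x : EuclideanSpace ℝ (Fin d),
            w₁ t x = (∫ s in Set.Ioc (0 : ℝ) t,
              ∫ y, heatKernel d (t - s) (x - y) * φ s y (w₁ s y)) + z₁ t x)
    (h₂ : ∀ t ∈ Set.Icc (0 : ℝ) T, ∀ x : EuclideanSpace ℝ (Fin d),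
            w₂ t x = (∫ s in Set.Ioc (0 : ℝ) t,
              ∫ y, heatKernel d (t - s) (x - y) * φ s y (w₂ s y)) + z₂ t x)
    {N : ℝ} (hN : 0 ≤ N) (hz : ∀ t ∈ Set.Icc 0 T, ∀ x, |z₁ t x - z₂ t x| ≤ N * rho d θ x₀ x) :
    ∀ t ∈ Set.Icc 0 T, ∀ x, (w₁ t x - w₂ t x) - (z₁ t x - z₂ t x) ≤
      2 * N * (Real.exp ((2 * |κ| + 1) * t) * PP d t (rho d θ x₀) x) := by
  obtain ⟨A₁, hA₁, hg₁⟩ := src_growth hT hK hβ hν hθ hφg hw₁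
  obtain ⟨A₂, hA₂, hg₂⟩ := src_growth hT hK hβ hν hθ hφg hw₂
  have hc₁ := src_cont hT hφc hw₁.1
  have hc₂ := src_cont hT hφc hw₂.1
  have hs₁ : ∀ s y, |src d T φ w₁ s y| ≤ A₁ * Real.exp (‖y - x₀‖ ^ 2 / (8 * T)) :=
    fun s y => hg₁ _ (cl_mem hT s) y
  have hs₂ : ∀ s y, |src d T φ w₂ s y| ≤ A₂ * Real.exp (‖y - x₀‖ ^ 2 / (8 * T)) :=
    fun s y => hg₂ _ (cl_mem hT s) y
  set f : ℝ → EuclideanSpace ℝ (Fin d) → ℝ := fun s y => src d T φ w₁ s y - src d T φ w₂ s y with hf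
  have hVf : ∀ t ∈ Set.Icc 0 T, ∀ x, VV d f t x = (w₁ t x - w₂ t x) - (z₁ t x - z₂ t x) := by
    intro t ht x
    rw [hf, VV_sub hT hA₁ hA₂ hc₁ hc₂ hs₁ hs₂ ht.2 x, ← kernel_eq_VV ht x, ← kernel_eq_VV ht x,
      h₁ t ht x, h₂ t ht x]
    ring
  intro t ht x
  rw [← hVf t ht x]
  refine core hT (add_nonneg hA₁ hA₂) hθ.1 (abs_nonneg κ) hN (f := f) (hc₁.sub hc₂) ?_ ?_ ?_ t ht x
  · intro s y
    have := abs_sub (src d T φ w₁ s y) (src d T φ w₂ s y)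
    rw [hf, add_mul]
    simp only
    linarith [hs₁ s y, hs₂ s y]
  · exact memC_congr (memC_sub (memC_sub hw₁ hw₂) (memC_sub hz₁ hz₂)) hVf
  · intro t ht x hlt
    rw [hVf t ht x] at hlt ⊢
    have hzz := abs_le.1 (hz t ht x)
    have hpos : w₂ t x < w₁ t x := by linarith
    have := hφ t ht x _ _ hpos
    have e : f t x = φ t x (w₁ t x) - φ t x (w₂ t x) := by
      rw [hf]; simp only [src, cl_eq ht]
    rw [e]
    refine this.trans ?_
    calc κ * (w₁ t x - w₂ t x) ≤ |κ| * (w₁ t x - w₂ t x) := by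
          gcongr
          exact le_abs_self _
      _ ≤ _ := by gcongr; linarith

end HeatLip

/-- Lipschitz continuity of the map `z ↦ L(z)` where `L(z)` solves the
perturbed heat equation with inhomogeneous half-Lipschitz reaction term `φ`:
the constant depends only on `T`, `θ`, `κ` (not on `x₀`, `K`, `β`, nor on `φ`
beyond its half-Lipschitz constant `κ`). -/
theorem inhomogeneous_reaction_map_lipschitz
    (d : ℕ) (hd : 1 ≤ d) (T : ℝ) (hT : 0 < T) (κ ν θ : ℝ) (hν : 0 < ν)
    (hθ : θ ∈ Set.Ioo (0 : ℝ) (2 / ν)) :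
    ∃ K' > (0 : ℝ), ∀ (K β : ℝ), 0 < K → β ∈ Set.Ico (0 : ℝ) 2 →
      ∀ (x₀ : EuclideanSpace ℝ (Fin d))
        (φ : ℝ → EuclideanSpace ℝ (Fin d) → ℝ → ℝ),
        ContinuousOn (fun p : ℝ × EuclideanSpace ℝ (Fin d) × ℝ => φ p.1 p.2.1 p.2.2)
          (Set.Icc 0 T ×ˢ Set.univ ×ˢ Set.univ) →
        (∀ t ∈ Set.Icc (0 : ℝ) T, ∀ (x : EuclideanSpace ℝ (Fin d)) (u₁ u₂ : ℝ),
          u₂ < u₁ → φ t x u₁ - φ t x u₂ ≤ κ * (u₁ - u₂)) →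
        (∀ t ∈ Set.Icc (0 : ℝ) T, ∀ (x : EuclideanSpace ℝ (Fin d)) (u : ℝ),
          |φ t x u| ≤ K * Real.exp (K * (‖x - x₀‖ ^ β + |u| ^ ν))) →
        ∀ z₁ z₂ w₁ w₂ : ℝ → EuclideanSpace ℝ (Fin d) → ℝ,
          memC d T θ x₀ z₁ → memC d T θ x₀ z₂ →
          memC d T θ x₀ w₁ → memC d T θ x₀ w₂ →
          (∀ t ∈ Set.Icc (0 : ℝ) T, ∀ x : EuclideanSpace ℝ (Fin d),
            w₁ t x = (∫ s in Set.Ioc (0 : ℝ) t,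
              ∫ y, heatKernel d (t - s) (x - y) * φ s y (w₁ s y)) + z₁ t x) →
          (∀ t ∈ Set.Icc (0 : ℝ) T, ∀ x : EuclideanSpace ℝ (Fin d),
            w₂ t x = (∫ s in Set.Ioc (0 : ℝ) t,
              ∫ y, heatKernel d (t - s) (x - y) * φ s y (w₂ s y)) + z₂ t x) →
          wNorm d T θ x₀ (fun t x => w₁ t x - w₂ t x) ≤
            K' * wNorm d T θ x₀ (fun t x => z₁ t x - z₂ t x) := by
  obtain ⟨C, hC, hup⟩ := HeatLip.rho_upper d hθ.1 hT
  refine ⟨2 * (Real.exp ((2 * |κ| + 1) * T) * C) + 1, by positivity, ?_⟩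
  intro K β hK hβ x₀ φ hφc hφ hφg z₁ z₂ w₁ w₂ hz₁ hz₂ hw₁ hw₂ h₁ h₂
  set N := wNorm d T θ x₀ (fun t x => z₁ t x - z₂ t x) with hNdef
  have hN : 0 ≤ N := HeatLip.wNorm_nonneg
  have hz : ∀ t ∈ Set.Icc 0 T, ∀ x, |z₁ t x - z₂ t x| ≤ N * HeatLip.rho d θ x₀ x :=
    HeatLip.le_wNorm (HeatLip.memC_sub hz₁ hz₂)
  have hz' : ∀ t ∈ Set.Icc 0 T, ∀ x, |z₂ t x - z₁ t x| ≤ N * HeatLip.rho d θ x₀ x :=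
    fun t ht x => by rw [abs_sub_comm]; exact hz t ht x
  have a₁ := HeatLip.oneside hT hν hθ hK hβ hφc hφ hφg hz₁ hz₂ hw₁ hw₂ h₁ h₂ hN hz
  have a₂ := HeatLip.oneside hT hν hθ hK hβ hφc hφ hφg hz₂ hz₁ hw₂ hw₁ h₂ h₁ hN hz'
  refine HeatLip.wNorm_le (by positivity) fun t ht x => ?_
  have hb : 2 * N * (Real.exp ((2 * |κ| + 1) * t) * HeatLip.PP d t (HeatLip.rho d θ x₀) x) ≤
      2 * N * (Real.exp ((2 * |κ| + 1) * T) * (C * HeatLip.rho d θ x₀ x)) := by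
    have h3 := HeatLip.rho_lower d hθ.1 hT x₀ x ht.2
    have h4 := HeatLip.rho_pos d θ x₀ x
    have h5 : 0 ≤ HeatLip.PP d t (HeatLip.rho d θ x₀) x := by linarith
    gcongr
    · exact ht.2
    · exact hup x₀ x t ht.2
  have b₁ := a₁ t ht x
  have b₂ := a₂ t ht x
  have b₃ := abs_le.1 (hz t ht x)
  rw [abs_le]
  constructor <;> linarith
end

section
/- Let d ≥ 1, T > 0, x₀ ∈ ℝ^d, and let f : ℝ → ℝ satisfy Assumption (f) with constants κ ∈ ℝ, K > 0, ν > 0; write f(u) = φ(u) + κu where φ(u) := f(u) - κu is non-increasing, and let f_λ(u) := φ_λ(u) + κu be its Yosida-type approximations. Let θ ∈ (0, 2/ν) and z ∈ C_{θ,x₀}. For each λ ∈ (0,1) let m_λ ∈ C_{θ,x₀} be a solution of m_λ(t,x) = ∫_0^t ∫_{ℝ^d} G(t-s, x-y) f_λ(m_λ(s,y)) dy ds + z(t,x) for all (t,x), and let m ∈ C_{θ,x₀} be a solution of m(t,x) = ∫_0^t ∫_{ℝ^d} G(t-s, x-y) f(m(s,y)) dy ds + z(t,x) for all (t,x). Then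 for every (t,x) ∈ [0,T]×ℝ^d, lim_{λ → 0⁺} m_λ(t,x) = m(t,x). -/
open MeasureTheory

section aux
variable {d : ℕ}

lemma hk_nonneg {t : ℝ} (ht : 0 ≤ t) (x : EuclideanSpace ℝ (Fin d)) :
    0 ≤ heatKernel d t x := by
  unfold heatKernel
  positivity

lemma hk_meas : Measurable (fun p : ℝ × EuclideanSpace ℝ (Fin d) => heatKernel d p.1 p.2) := by
  unfold heatKernel
  fun_prop

lemma gauss_int (p q : ℝ) (h : 0 < p + q) (x z : EuclideanSpace ℝ (Fin d)) :
    ∫ y, Real.exp (-p * ‖x - y‖ ^ 2 - q * ‖y - z‖ ^ 2)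
      = (Real.pi / (p + q)) ^ ((d : ℝ) / 2) * Real.exp (-(p * q / (p + q)) * ‖x - z‖ ^ 2) := by
  have key : ∀ y : EuclideanSpace ℝ (Fin d), -p * ‖x - y‖ ^ 2 - q * ‖y - z‖ ^ 2
      = -(p + q) * ‖y - (z + (p / (p + q)) • (x - z))‖ ^ 2 + -(p * q / (p + q)) * ‖x - z‖ ^ 2 := by
    intro y
    have e1 : x - y = (x - z) - (y - z) := by abel
    have e2 : y - (z + (p / (p + q)) • (x - z)) = (y - z) - (p / (p + q)) • (x - z) := by abel
    rw [e1, e2]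
    generalize x - z = a
    generalize y - z = b
    rw [norm_sub_sq_real, norm_sub_sq_real, inner_smul_right, norm_smul, mul_pow,
      real_inner_comm, Real.norm_eq_abs, sq_abs]
    field_simp
    ring
  simp_rw [key, Real.exp_add]
  rw [integral_mul_const]
  congr 1
  rw [integral_sub_right_eq_self (fun y : EuclideanSpace ℝ (Fin d) => Real.exp (-(p + q) * ‖y‖ ^ 2))]
  rw [GaussianFourier.integral_rexp_neg_mul_sq_norm h]
  simp

/-- exponentially growing caloric weight -/
noncomputable def psi (c : ℝ) (x₀ : EuclideanSpace ℝ (Fin d)) (p : ℝ × EuclideanSpace ℝ (Fin d)) : ℝ :=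
  (c - p.1) ^ (-(d : ℝ) / 2) * Real.exp (‖p.2 - x₀‖ ^ 2 / (2 * (c - p.1)))

lemma psi_meas (c : ℝ) (x₀ : EuclideanSpace ℝ (Fin d)) : Measurable (psi c x₀) := by
  unfold psi
  fun_prop

lemma psi_pos {c : ℝ} (x₀ : EuclideanSpace ℝ (Fin d)) {p : ℝ × EuclideanSpace ℝ (Fin d)}
    (h : p.1 < c) : 0 < psi c x₀ p := by
  unfold psi
  have : 0 < c - p.1 := by linarith
  positivity

lemma rp_neg (a : ℝ) (ha : 0 ≤ a) : a ^ (-(d : ℝ) / 2) = (a ^ ((d : ℝ) / 2))⁻¹ := by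
  rw [neg_div, Real.rpow_neg ha]

lemma hk_ck {a b : ℝ} (ha : 0 < a) (hb : 0 < b) (x z : EuclideanSpace ℝ (Fin d)) :
    ∫ y, heatKernel d a (x - y) * heatKernel d b (y - z) = heatKernel d (a + b) (x - z) := by
  have h := gauss_int (1 / (2 * a)) (1 / (2 * b)) (by positivity) x z
  have e : ∀ y : EuclideanSpace ℝ (Fin d), heatKernel d a (x - y) * heatKernel d b (y - z)
      = ((2 * Real.pi * a) ^ (-(d : ℝ) / 2) * (2 * Real.pi * b) ^ (-(d : ℝ) / 2)) *
        Real.exp (-(1 / (2 * a)) * ‖x - y‖ ^ 2 - (1 / (2 * b)) * ‖y - z‖ ^ 2) := by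
    intro y
    unfold heatKernel
    rw [sub_eq_add_neg (-(1 / (2 * a)) * ‖x - y‖ ^ 2), Real.exp_add]
    have e1 : -‖x - y‖ ^ 2 / (2 * a) = -(1 / (2 * a)) * ‖x - y‖ ^ 2 := by ring
    have e2 : -‖y - z‖ ^ 2 / (2 * b) = -((1 / (2 * b)) * ‖y - z‖ ^ 2) := by ring
    rw [e1, e2]
    ring
  simp_rw [e]
  rw [integral_const_mul, h, ← mul_assoc]
  unfold heatKernel
  congr 1
  · rw [← Real.mul_rpow (by positivity) (by positivity), rp_neg _ (by positivity),
      rp_neg _ (by positivity), ← Real.inv_rpow (by positivity), ← Real.inv_rpow (by positivity),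
      ← Real.mul_rpow (by positivity) (by positivity)]
    congr 1
    field_simp
    ring
  · congr 1
    field_simp
    ring

lemma hk_psi {a s c : ℝ} (ha : 0 < a) (hc : s + a < c) (x x₀ : EuclideanSpace ℝ (Fin d)) :
    ∫ y, heatKernel d a (x - y) * psi c x₀ (s, y) = psi c x₀ (s + a, x) := by
  have hcs : 0 < c - s := by linarith
  have hca : 0 < c - (s + a) := by linarith
  have hpq : 1 / (2 * a) + (-(1 / (2 * (c - s)))) = (c - (s + a)) / (2 * a * (c - s)) := by
    field_simp
    ring
  have h := gauss_int (1 / (2 * a)) (-(1 / (2 * (c - s)))) (by rw [hpq]; positivity) x x₀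
  have e : ∀ y : EuclideanSpace ℝ (Fin d), heatKernel d a (x - y) * psi c x₀ (s, y)
      = ((2 * Real.pi * a) ^ (-(d : ℝ) / 2) * (c - s) ^ (-(d : ℝ) / 2)) *
        Real.exp (-(1 / (2 * a)) * ‖x - y‖ ^ 2 - (-(1 / (2 * (c - s)))) * ‖y - x₀‖ ^ 2) := by
    intro y
    unfold heatKernel psi
    rw [sub_eq_add_neg (-(1 / (2 * a)) * ‖x - y‖ ^ 2), Real.exp_add]
    have e1 : -‖x - y‖ ^ 2 / (2 * a) = -(1 / (2 * a)) * ‖x - y‖ ^ 2 := by ring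
    have e2 : ‖y - x₀‖ ^ 2 / (2 * (c - s)) = -(-(1 / (2 * (c - s))) * ‖y - x₀‖ ^ 2) := by ring
    simp only
    rw [e1, e2]
    ring
  simp_rw [e]
  rw [integral_const_mul, h, ← mul_assoc, hpq]
  unfold psi
  simp only
  congr 1
  · rw [← Real.mul_rpow (by positivity) (by positivity), rp_neg _ (by positivity),
      rp_neg _ (by positivity), ← Real.inv_rpow (by positivity), ← Real.inv_rpow (by positivity),
      ← Real.mul_rpow (by positivity) (by positivity)]
    congr 1
    field_simp
  · congr 1
    field_simp

lemma hk_ck_integrable {a b : ℝ} (ha : 0 < a) (hb : 0 < b) (x z : EuclideanSpace ℝ (Fin d)) :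
    Integrable (fun y => heatKernel d a (x - y) * heatKernel d b (y - z)) := by
  apply Integrable.of_integral_ne_zero
  rw [hk_ck ha hb]
  unfold heatKernel
  positivity

lemma hk_psi_integrable {a s c : ℝ} (ha : 0 < a) (hc : s + a < c) (x x₀ : EuclideanSpace ℝ (Fin d)) :
    Integrable (fun y => heatKernel d a (x - y) * psi c x₀ (s, y)) := by
  apply Integrable.of_integral_ne_zero
  rw [hk_psi ha hc]
  exact (psi_pos x₀ hc).ne'

lemma layer_int (a b A : ℝ) (Kf : ℝ × EuclideanSpace ℝ (Fin d) → ℝ) (hm : Measurable Kf)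
    (hpos : ∀ p, 0 ≤ Kf p)
    (hz : ∀ p, p.1 ∉ Set.Ioo a b → Kf p = 0)
    (hi : ∀ s ∈ Set.Ioo a b, Integrable (fun y => Kf (s, y)))
    (hA : ∀ s ∈ Set.Ioo a b, ∫ y, Kf (s, y) = A) (e : ℝ → ℝ) (he : Continuous e) :
    Integrable (fun p : ℝ × EuclideanSpace ℝ (Fin d) => e p.1 * Kf p) ∧
      ∫ p : ℝ × EuclideanSpace ℝ (Fin d), e p.1 * Kf p = (∫ s in Set.Ioc a b, e s) * A := by
  have hA' : ∀ s, ∫ y, Kf (s, y) = (Set.Ioo a b).indicator (fun _ => A) s := by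
    intro s
    by_cases hs : s ∈ Set.Ioo a b
    · rw [hA s hs, Set.indicator_of_mem hs]
    · rw [Set.indicator_of_notMem hs]
      simp [hz (s, _) hs]
  have hint : Integrable (fun p : ℝ × EuclideanSpace ℝ (Fin d) => e p.1 * Kf p) := by
    rw [Measure.volume_eq_prod, integrable_prod_iff (by fun_prop)]
    constructor
    · refine Filter.Eventually.of_forall fun s => ?_
      by_cases hs : s ∈ Set.Ioo a b
      · exact (hi s hs).const_mul (e s)
      · simp [hz (s, _) hs]
    · have : (fun s => ∫ y, ‖e s * Kf (s, y)‖) = (Set.Ioo a b).indicator (fun s => |e s| * A) := by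
        funext s
        simp_rw [norm_mul, Real.norm_eq_abs, abs_of_nonneg (hpos _)]
        rw [integral_const_mul, hA' s]
        by_cases hs : s ∈ Set.Ioo a b <;> simp [hs]
      simp only [this]
      rw [integrable_indicator_iff measurableSet_Ioo]
      have : IntegrableOn (fun s => |e s| * A) (Set.Icc a b) :=
        (Continuous.continuousOn (by fun_prop)).integrableOn_compact isCompact_Icc
      exact this.mono_set Set.Ioo_subset_Icc_self
  refine ⟨hint, ?_⟩
  rw [Measure.volume_eq_prod] at hint ⊢
  rw [integral_prod _ hint]
  simp_rw [integral_const_mul, hA']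
  have : (fun s => e s * (Set.Ioo a b).indicator (fun _ => A) s)
      = (Set.Ioo a b).indicator (fun s => e s * A) := by
    funext s
    by_cases hs : s ∈ Set.Ioo a b <;> simp [hs]
  rw [this, integral_indicator measurableSet_Ioo, integral_mul_const, integral_Ioc_eq_integral_Ioo]

/-- causal heat kernel -/
noncomputable def kk (q p : ℝ × EuclideanSpace ℝ (Fin d)) : ℝ :=
  if 0 < p.1 ∧ p.1 < q.1 then heatKernel d (q.1 - p.1) (q.2 - p.2) else 0

lemma kk_nonneg (q p : ℝ × EuclideanSpace ℝ (Fin d)) : 0 ≤ kk q p := by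
  unfold kk
  split_ifs with h
  · exact hk_nonneg (by linarith [h.2]) _
  · exact le_rfl

lemma kk_zero {q p : ℝ × EuclideanSpace ℝ (Fin d)} (h : p.1 ∉ Set.Ioo 0 q.1) : kk q p = 0 := by
  unfold kk
  rw [if_neg]
  exact h

lemma kk_meas : Measurable (fun r : (ℝ × EuclideanSpace ℝ (Fin d)) × (ℝ × EuclideanSpace ℝ (Fin d)) =>
    kk r.1 r.2) := by
  unfold kk
  apply Measurable.ite
  · exact (measurableSet_lt measurable_const measurable_snd.fst).inter
      (measurableSet_lt measurable_snd.fst measurable_fst.fst)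
  · have : Measurable (fun r : (ℝ × EuclideanSpace ℝ (Fin d)) × (ℝ × EuclideanSpace ℝ (Fin d)) =>
      ((r.1.1 - r.2.1, r.1.2 - r.2.2) : ℝ × EuclideanSpace ℝ (Fin d))) := by fun_prop
    exact hk_meas.comp this
  · exact measurable_const

lemma kk_meas1 (q : ℝ × EuclideanSpace ℝ (Fin d)) : Measurable (fun p => kk q p) :=
  kk_meas.comp (by fun_prop : Measurable (fun p => (q, p)))

lemma kk_meas2 (q : ℝ × EuclideanSpace ℝ (Fin d)) : Measurable (fun p => kk p q) :=
  kk_meas.comp (by fun_prop : Measurable (fun p => (p, q)))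

lemma kk_psi {c : ℝ} (x₀ : EuclideanSpace ℝ (Fin d)) (q : ℝ × EuclideanSpace ℝ (Fin d)) (hq : q.1 < c)
    (e : ℝ → ℝ) (he : Continuous e) :
    Integrable (fun p : ℝ × EuclideanSpace ℝ (Fin d) => e p.1 * (kk q p * psi c x₀ p)) ∧
      ∫ p : ℝ × EuclideanSpace ℝ (Fin d), e p.1 * (kk q p * psi c x₀ p)
        = (∫ s in Set.Ioc 0 q.1, e s) * psi c x₀ q := by
  have hk : ∀ s ∈ Set.Ioo 0 q.1, ∀ y, kk q (s, y) = heatKernel d (q.1 - s) (q.2 - y) := by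
    intro s hs y
    unfold kk
    rw [if_pos]
    exact hs
  apply layer_int
  · exact (kk_meas1 q).mul (psi_meas c x₀)
  · intro p
    by_cases h : p.1 ∈ Set.Ioo 0 q.1
    · exact mul_nonneg (kk_nonneg _ _) (psi_pos x₀ (h.2.trans hq)).le
    · rw [kk_zero h, zero_mul]
  · intro p h
    rw [kk_zero h, zero_mul]
  · intro s hs
    simp_rw [hk s hs]
    exact hk_psi_integrable (sub_pos.2 hs.2) (by linarith) _ _
  · intro s hs
    simp_rw [hk s hs]
    rw [hk_psi (sub_pos.2 hs.2) (by linarith)]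
    simp
  · exact he

lemma kk_kk (q r : ℝ × EuclideanSpace ℝ (Fin d))
    (e : ℝ → ℝ) (he : Continuous e) :
      ∫ p : ℝ × EuclideanSpace ℝ (Fin d), e p.1 * (kk q p * kk p r)
        = (∫ s in Set.Ioc r.1 q.1, e s) * kk q r := by
  by_cases hr : r.1 ∈ Set.Ioo 0 q.1
  swap
  · rw [kk_zero hr, mul_zero]
    have : ∀ p : ℝ × EuclideanSpace ℝ (Fin d), e p.1 * (kk q p * kk p r) = 0 := by
      intro p
      by_cases h : p.1 ∈ Set.Ioo 0 q.1
      · have h2 : r.1 ∉ Set.Ioo 0 p.1 := fun h3 => hr ⟨h3.1, h3.2.trans h.2⟩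
        rw [kk_zero h2]; simp
      · rw [kk_zero h]; simp
    simp [this]
  refine (layer_int r.1 q.1 (kk q r) (fun p => kk q p * kk p r) ?_ ?_ ?_ ?_ ?_ e he).2
  · exact (kk_meas1 q).mul (kk_meas2 r)
  · intro p
    exact mul_nonneg (kk_nonneg _ _) (kk_nonneg _ _)
  · intro p h
    by_cases h1 : p.1 ∈ Set.Ioo 0 q.1
    · have h2 : r.1 ∉ Set.Ioo 0 p.1 := fun h3 => h ⟨h3.2, h1.2⟩
      rw [kk_zero h2]; simp
    · rw [kk_zero h1]; simp
  all_goals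
    intro s hs
    have hk : ∀ y, kk q (s, y) * kk (s, y) r =
        heatKernel d (q.1 - s) (q.2 - y) * heatKernel d (s - r.1) (y - r.2) := by
      intro y
      unfold kk
      rw [if_pos ⟨hr.1.trans hs.1, hs.2⟩, if_pos ⟨hr.1, hs.1⟩]
    simp_rw [hk]
  · exact hk_ck_integrable (sub_pos.2 hs.2) (sub_pos.2 hs.1) _ _
  · rw [hk_ck (sub_pos.2 hs.2) (sub_pos.2 hs.1)]
    unfold kk
    rw [if_pos ⟨hr.1, hr.2⟩]
    congr 1
    ring

/-- Duhamel operator -/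
noncomputable def DD (α : ℝ) (F : ℝ × EuclideanSpace ℝ (Fin d) → ℝ) (q : ℝ × EuclideanSpace ℝ (Fin d)) : ℝ :=
  ∫ p, Real.exp (α * (q.1 - p.1)) * kk q p * F p

lemma DD_meas (α : ℝ) (F : ℝ × EuclideanSpace ℝ (Fin d) → ℝ) (hF : Measurable F) :
    Measurable (DD α F) := by
  have h : Measurable (fun r : (ℝ × EuclideanSpace ℝ (Fin d)) × (ℝ × EuclideanSpace ℝ (Fin d)) =>
      Real.exp (α * (r.1.1 - r.2.1)) * kk r.1 r.2 * F r.2) := by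
    have := kk_meas (d := d)
    fun_prop
  exact h.stronglyMeasurable.integral_prod_right'.measurable

lemma DD_point {T c C α : ℝ} (x₀ : EuclideanSpace ℝ (Fin d))
    (F : ℝ × EuclideanSpace ℝ (Fin d) → ℝ)
    (hb : ∀ p : ℝ × EuclideanSpace ℝ (Fin d), p.1 ∈ Set.Icc 0 T → |F p| ≤ C * psi c x₀ p)
    (q : ℝ × EuclideanSpace ℝ (Fin d)) (hq : q.1 ∈ Set.Icc 0 T) (p : ℝ × EuclideanSpace ℝ (Fin d)) :
    ‖Real.exp (α * (q.1 - p.1)) * kk q p * F p‖ ≤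
      (Real.exp (|α| * T) * C) * (kk q p * psi c x₀ p) := by
  by_cases h : p.1 ∈ Set.Ioo 0 q.1
  swap
  · simp [kk_zero h]
  have h1 := hb p ⟨h.1.le, h.2.le.trans hq.2⟩
  rw [norm_mul, norm_mul, Real.norm_eq_abs, Real.norm_eq_abs, Real.norm_eq_abs, Real.abs_exp,
    abs_of_nonneg (kk_nonneg q p)]
  have h2 : Real.exp (α * (q.1 - p.1)) ≤ Real.exp (|α| * T) := by
    apply Real.exp_le_exp.2
    have := h.1
    have := h.2
    have := hq.2
    calc α * (q.1 - p.1) ≤ |α| * (q.1 - p.1) :=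
          mul_le_mul_of_nonneg_right (le_abs_self _) (by linarith)
      _ ≤ |α| * T := mul_le_mul_of_nonneg_left (by linarith) (abs_nonneg _)
  have hk := kk_nonneg q p
  calc Real.exp (α * (q.1 - p.1)) * kk q p * |F p|
      ≤ Real.exp (|α| * T) * kk q p * (C * psi c x₀ p) := by gcongr
    _ = _ := by ring

lemma DD_integrable {T c C α : ℝ} (hc : T < c) (x₀ : EuclideanSpace ℝ (Fin d))
    (F : ℝ × EuclideanSpace ℝ (Fin d) → ℝ) (hF : Measurable F)
    (hb : ∀ p : ℝ × EuclideanSpace ℝ (Fin d), p.1 ∈ Set.Icc 0 T → |F p| ≤ C * psi c x₀ p)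
    (q : ℝ × EuclideanSpace ℝ (Fin d)) (hq : q.1 ∈ Set.Icc 0 T) :
    Integrable (fun p => Real.exp (α * (q.1 - p.1)) * kk q p * F p) := by
  refine Integrable.mono' (kk_psi x₀ q (hq.2.trans_lt hc)
    (fun _ => Real.exp (|α| * T) * C) continuous_const).1 ?_
    (Filter.Eventually.of_forall (DD_point x₀ F hb q hq))
  have := kk_meas1 q
  apply Measurable.aestronglyMeasurable
  fun_prop

lemma DD_bound {T c C α : ℝ} (hc : T < c) (x₀ : EuclideanSpace ℝ (Fin d))
    (F : ℝ × EuclideanSpace ℝ (Fin d) → ℝ) (hC : 0 ≤ C)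
    (hb : ∀ p : ℝ × EuclideanSpace ℝ (Fin d), p.1 ∈ Set.Icc 0 T → |F p| ≤ C * psi c x₀ p)
    (q : ℝ × EuclideanSpace ℝ (Fin d)) (hq : q.1 ∈ Set.Icc 0 T) :
    ∫ p, ‖Real.exp (α * (q.1 - p.1)) * kk q p * F p‖ ≤ (Real.exp (|α| * T) * C * T) * psi c x₀ q := by
  have h := kk_psi x₀ q (hq.2.trans_lt hc)
    (fun _ => Real.exp (|α| * T) * C) continuous_const
  refine (integral_mono_of_nonneg (Filter.Eventually.of_forall fun p => norm_nonneg _) h.1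
    (Filter.Eventually.of_forall (DD_point x₀ F hb q hq))).trans ?_
  rw [h.2]
  have hp := (psi_pos x₀ (hq.2.trans_lt hc)).le
  gcongr
  have h0 := hq.1
  have h1 := hq.2
  simp [h0]
  rw [mul_comm]
  gcongr

lemma DD_lin {T c C C' β : ℝ} (hc : T < c) (x₀ : EuclideanSpace ℝ (Fin d))
    (F H : ℝ × EuclideanSpace ℝ (Fin d) → ℝ) (hF : Measurable F) (hH : Measurable H)
    (hb : ∀ p : ℝ × EuclideanSpace ℝ (Fin d), p.1 ∈ Set.Icc 0 T → |F p| ≤ C * psi c x₀ p)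
    (hb' : ∀ p : ℝ × EuclideanSpace ℝ (Fin d), p.1 ∈ Set.Icc 0 T → |H p| ≤ C' * psi c x₀ p)
    (q : ℝ × EuclideanSpace ℝ (Fin d)) (hq : q.1 ∈ Set.Icc 0 T) (k : ℝ) :
    DD β (fun p => F p + k * H p) q = DD β F q + k * DD β H q := by
  unfold DD
  rw [← integral_const_mul, ← integral_add (DD_integrable hc x₀ F hF hb q hq)
    ((DD_integrable hc x₀ H hH hb' q hq).const_mul _)]
  congr 1
  funext p
  ring

lemma DD_mono {T c C C' β : ℝ} (hc : T < c) (x₀ : EuclideanSpace ℝ (Fin d))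
    (F H : ℝ × EuclideanSpace ℝ (Fin d) → ℝ) (hF : Measurable F) (hH : Measurable H)
    (hb : ∀ p : ℝ × EuclideanSpace ℝ (Fin d), p.1 ∈ Set.Icc 0 T → |F p| ≤ C * psi c x₀ p)
    (hb' : ∀ p : ℝ × EuclideanSpace ℝ (Fin d), p.1 ∈ Set.Icc 0 T → |H p| ≤ C' * psi c x₀ p)
    (hle : ∀ p : ℝ × EuclideanSpace ℝ (Fin d), p.1 ∈ Set.Icc 0 T → F p ≤ H p)
    (q : ℝ × EuclideanSpace ℝ (Fin d)) (hq : q.1 ∈ Set.Icc 0 T) :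
    DD β F q ≤ DD β H q := by
  unfold DD
  apply integral_mono (DD_integrable hc x₀ F hF hb q hq) (DD_integrable hc x₀ H hH hb' q hq)
  intro p
  by_cases h : p.1 ∈ Set.Ioo 0 q.1
  · have := hle p ⟨h.1.le, h.2.le.trans hq.2⟩
    have := kk_nonneg q p
    simp only
    gcongr
  · simp [kk_zero h]

lemma DD_resolvent {T c C α β : ℝ} (hc : T < c) (x₀ : EuclideanSpace ℝ (Fin d))
    (F : ℝ × EuclideanSpace ℝ (Fin d) → ℝ) (hF : Measurable F) (hC : 0 ≤ C)
    (hb : ∀ p : ℝ × EuclideanSpace ℝ (Fin d), p.1 ∈ Set.Icc 0 T → |F p| ≤ C * psi c x₀ p)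
    (q : ℝ × EuclideanSpace ℝ (Fin d)) (hq : q.1 ∈ Set.Icc 0 T) :
    DD α F q = DD β (fun p => F p + (α - β) * DD α F p) q := by
  set C' := Real.exp (|α| * T) * C * T with hC'
  have hDb : ∀ p : ℝ × EuclideanSpace ℝ (Fin d), p.1 ∈ Set.Icc 0 T → |DD α F p| ≤ C' * psi c x₀ p := by
    intro p hp
    exact (norm_integral_le_integral_norm _).trans (DD_bound hc x₀ F hC hb p hp)
  have hDm := DD_meas α F hF
  -- Fubini
  have hswap : DD β (DD α F) q = ∫ r, (∫ s in Set.Ioc r.1 q.1,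
      Real.exp (β * (q.1 - s) + α * (s - r.1))) * kk q r * F r := by
    have hH : Integrable (Function.uncurry fun (p r : ℝ × EuclideanSpace ℝ (Fin d)) =>
        Real.exp (β * (q.1 - p.1)) * kk q p * (Real.exp (α * (p.1 - r.1)) * kk p r * F r))
        (volume.prod volume) := by
      rw [integrable_prod_iff]
      · constructor
        · refine Filter.Eventually.of_forall fun p => ?_
          simp only [Function.uncurry]
          by_cases h : p.1 ∈ Set.Ioo 0 q.1
          · exact (DD_integrable hc x₀ F hF hb p ⟨h.1.le, h.2.le.trans hq.2⟩).const_mul _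
          · simp [kk_zero h]
        · simp only [Function.uncurry, norm_mul]
          simp_rw [integral_const_mul]
          have hb2 : ∀ p : ℝ × EuclideanSpace ℝ (Fin d), p.1 ∈ Set.Icc 0 T →
              |∫ r, ‖Real.exp (α * (p.1 - r.1)) * kk p r * F r‖| ≤ C' * psi c x₀ p := by
            intro p hp
            rw [abs_of_nonneg (integral_nonneg fun _ => norm_nonneg _)]
            exact DD_bound hc x₀ F hC hb p hp
          have hm2 : Measurable (fun p : ℝ × EuclideanSpace ℝ (Fin d) =>
              ∫ r, ‖Real.exp (α * (p.1 - r.1)) * kk p r * F r‖) := by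
            have h : Measurable (fun r : (ℝ × EuclideanSpace ℝ (Fin d)) × (ℝ × EuclideanSpace ℝ (Fin d)) =>
                ‖Real.exp (α * (r.1.1 - r.2.1)) * kk r.1 r.2 * F r.2‖) := by
              have := kk_meas (d := d)
              fun_prop
            exact h.stronglyMeasurable.integral_prod_right'.measurable
          have := (DD_integrable (α := β) hc x₀ _ hm2 hb2 q hq).norm
          refine this.congr (Filter.Eventually.of_forall fun p => ?_)
          simp only [norm_mul]
          congr 1
          rw [Real.norm_of_nonneg]
          exact integral_nonneg fun _ => by positivity
      · apply Measurable.aestronglyMeasurable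
        have h1 := kk_meas (d := d)
        have h2 : Measurable (fun r : (ℝ × EuclideanSpace ℝ (Fin d)) × (ℝ × EuclideanSpace ℝ (Fin d)) =>
          kk q r.1) := (kk_meas1 q).comp measurable_fst
        unfold Function.uncurry
        fun_prop
    have e1 : DD β (DD α F) q = ∫ p, ∫ r,
        Real.exp (β * (q.1 - p.1)) * kk q p * (Real.exp (α * (p.1 - r.1)) * kk p r * F r) := by
      simp_rw [integral_const_mul]
      rfl
    rw [e1, integral_integral_swap hH]
    congr 1
    funext r
    rw [← kk_kk q r (fun s => Real.exp (β * (q.1 - s) + α * (s - r.1))) (by fun_prop),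
      ← integral_mul_const]
    congr 1
    funext p
    rw [Real.exp_add]
    ring
  have hD2 : DD β (fun p => F p + (α - β) * DD α F p) q
      = DD β F q + (α - β) * DD β (DD α F) q :=
    DD_lin hc x₀ F (DD α F) hF hDm hb hDb q hq _
  rw [hD2, hswap, ← integral_const_mul]
  have key : ∀ r : ℝ × EuclideanSpace ℝ (Fin d), (α - β) * ((∫ s in Set.Ioc r.1 q.1,
      Real.exp (β * (q.1 - s) + α * (s - r.1))) * kk q r * F r)
      = Real.exp (α * (q.1 - r.1)) * kk q r * F r - Real.exp (β * (q.1 - r.1)) * kk q r * F r := by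
    intro r
    by_cases hr : r.1 ∈ Set.Ioo 0 q.1
    swap
    · simp [kk_zero hr]
    have : (α - β) * (∫ s in Set.Ioc r.1 q.1, Real.exp (β * (q.1 - s) + α * (s - r.1)))
        = Real.exp (α * (q.1 - r.1)) - Real.exp (β * (q.1 - r.1)) := by
      rw [← intervalIntegral.integral_of_le hr.2.le, ← intervalIntegral.integral_const_mul]
      rw [intervalIntegral.integral_eq_sub_of_hasDerivAt
        (f := fun s => Real.exp (β * (q.1 - s) + α * (s - r.1)))]
      · simp
      · intro s _
        have h1 : HasDerivAt (fun s : ℝ => β * (q.1 - s) + α * (s - r.1)) (α - β) s := by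
          have := (((hasDerivAt_id s).const_sub q.1).const_mul β).add
            (((hasDerivAt_id s).sub_const r.1).const_mul α)
          exact this.congr_deriv (by ring)
        exact h1.exp.congr_deriv (mul_comm _ _)
      · apply Continuous.intervalIntegrable
        fun_prop
    rw [← mul_assoc, ← mul_assoc, this]
    ring
  simp_rw [key]
  rw [integral_sub (DD_integrable hc x₀ F hF hb q hq) (DD_integrable hc x₀ F hF hb q hq)]
  unfold DD
  ring

lemma DD_nonneg {T β : ℝ}
    (F : ℝ × EuclideanSpace ℝ (Fin d) → ℝ)
    (h0 : ∀ p : ℝ × EuclideanSpace ℝ (Fin d), p.1 ∈ Set.Icc 0 T → 0 ≤ F p)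
    (q : ℝ × EuclideanSpace ℝ (Fin d)) (hq : q.1 ∈ Set.Icc 0 T) :
    0 ≤ DD β F q := by
  unfold DD
  apply integral_nonneg
  intro p
  by_cases h : p.1 ∈ Set.Ioo 0 q.1
  · have := h0 p ⟨h.1.le, h.2.le.trans hq.2⟩
    have := kk_nonneg q p
    simp only [Pi.zero_apply]
    positivity
  · simp [kk_zero h]

lemma DD_congr {T β : ℝ}
    (F H : ℝ × EuclideanSpace ℝ (Fin d) → ℝ)
    (h0 : ∀ p : ℝ × EuclideanSpace ℝ (Fin d), p.1 ∈ Set.Icc 0 T → F p = H p)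
    (q : ℝ × EuclideanSpace ℝ (Fin d)) (hq : q.1 ∈ Set.Icc 0 T) :
    DD β F q = DD β H q := by
  unfold DD
  congr 1
  funext p
  by_cases h : p.1 ∈ Set.Ioo 0 q.1
  · rw [h0 p ⟨h.1.le, h.2.le.trans hq.2⟩]
  · simp [kk_zero h]

lemma DD_iterated {T c C : ℝ} (hc : T < c) (x₀ : EuclideanSpace ℝ (Fin d))
    (F : ℝ × EuclideanSpace ℝ (Fin d) → ℝ) (hF : Measurable F)
    (hb : ∀ p : ℝ × EuclideanSpace ℝ (Fin d), p.1 ∈ Set.Icc 0 T → |F p| ≤ C * psi c x₀ p)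
    (q : ℝ × EuclideanSpace ℝ (Fin d)) (hq : q.1 ∈ Set.Icc 0 T) :
    DD 0 F q = ∫ s in Set.Ioc 0 q.1, ∫ y, heatKernel d (q.1 - s) (q.2 - y) * F (s, y) := by
  have hi := DD_integrable (α := 0) hc x₀ F hF hb q hq
  unfold DD
  rw [Measure.volume_eq_prod] at hi ⊢
  rw [integral_prod _ hi, integral_Ioc_eq_integral_Ioo, ← integral_indicator measurableSet_Ioo]
  congr 1
  funext s
  by_cases hs : s ∈ Set.Ioo 0 q.1
  · rw [Set.indicator_of_mem hs]
    congr 1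
    funext y
    unfold kk
    rw [if_pos ⟨hs.1, hs.2⟩]
    simp
  · rw [Set.indicator_of_notMem hs]
    have : ∀ y : EuclideanSpace ℝ (Fin d), kk q (s, y) = 0 := fun y => kk_zero hs
    simp [this]

lemma DD_abs {β : ℝ} (F : ℝ × EuclideanSpace ℝ (Fin d) → ℝ)
    (q : ℝ × EuclideanSpace ℝ (Fin d)) : |DD β F q| ≤ DD β (fun p => |F p|) q := by
  unfold DD
  refine (abs_integral_le_integral_abs).trans (le_of_eq ?_)
  congr 1
  funext p
  rw [abs_mul, abs_mul, Real.abs_exp, abs_of_nonneg (kk_nonneg q p)]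

lemma int_exp_le {b t : ℝ} (hb : 0 < b) (ht : 0 ≤ t) :
    ∫ s in Set.Ioc 0 t, Real.exp (b * s) ≤ Real.exp (b * t) / b := by
  rw [← intervalIntegral.integral_of_le ht,
    intervalIntegral.integral_eq_sub_of_hasDerivAt (f := fun s => Real.exp (b * s) / b)]
  · have : 0 < Real.exp (b * 0) / b := by positivity
    linarith
  · intro s _
    have := (((hasDerivAt_id s).const_mul b).exp).div_const b
    refine this.congr_deriv ?_
    simp only [id]
    field_simp
  · apply Continuous.intervalIntegrable
    fun_prop

lemma comparison {T c C κ L : ℝ} (hc : T < c) (hT : 0 ≤ T) (x₀ : EuclideanSpace ℝ (Fin d))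
    (W F g : ℝ × EuclideanSpace ℝ (Fin d) → ℝ) (hWm : Measurable W) (hFm : Measurable F)
    (hgm : Measurable g) (hC : 0 ≤ C) (hL : 0 ≤ L) (hLκ : 0 ≤ L + κ)
    (hWb : ∀ p : ℝ × EuclideanSpace ℝ (Fin d), p.1 ∈ Set.Icc 0 T → |W p| ≤ C * psi c x₀ p)
    (hFb : ∀ p : ℝ × EuclideanSpace ℝ (Fin d), p.1 ∈ Set.Icc 0 T → |F p| ≤ C * psi c x₀ p)
    (hgb : ∀ p : ℝ × EuclideanSpace ℝ (Fin d), p.1 ∈ Set.Icc 0 T → |g p| ≤ C * psi c x₀ p)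
    (hg0 : ∀ p : ℝ × EuclideanSpace ℝ (Fin d), p.1 ∈ Set.Icc 0 T → 0 ≤ g p)
    (hW : ∀ p : ℝ × EuclideanSpace ℝ (Fin d), p.1 ∈ Set.Icc 0 T → W p = DD 0 F p)
    (hFW : ∀ p : ℝ × EuclideanSpace ℝ (Fin d), p.1 ∈ Set.Icc 0 T →
      |F p + L * W p| ≤ (L + κ) * |W p| + g p)
    (q : ℝ × EuclideanSpace ℝ (Fin d)) (hq : q.1 ∈ Set.Icc 0 T) :
    |W q| ≤ DD κ g q := by
  set v := DD κ g with hv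
  have hvm : Measurable v := DD_meas κ g hgm
  have hv0 : ∀ p : ℝ × EuclideanSpace ℝ (Fin d), p.1 ∈ Set.Icc 0 T → 0 ≤ v p :=
    fun p hp => DD_nonneg g hg0 p hp
  set C' := Real.exp (|κ| * T) * C * T with hC'
  have hC'0 : 0 ≤ C' := by positivity
  have hvb : ∀ p : ℝ × EuclideanSpace ℝ (Fin d), p.1 ∈ Set.Icc 0 T → |v p| ≤ C' * psi c x₀ p :=
    fun p hp => (norm_integral_le_integral_norm _).trans (DD_bound hc x₀ g hC hgb p hp)
  have hpsi : ∀ p : ℝ × EuclideanSpace ℝ (Fin d), p.1 ∈ Set.Icc 0 T → 0 ≤ psi c x₀ p :=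
    fun p hp => (psi_pos x₀ (hp.2.trans_lt hc)).le
  -- the difference
  have hstep : ∀ p : ℝ × EuclideanSpace ℝ (Fin d), p.1 ∈ Set.Icc 0 T →
      |W p| - v p ≤ DD (-L) (fun r => (L + κ) * (|W r| - v r)) p := by
    intro p hp
    have e1 : W p = DD (-L) (fun r => F r + L * W r) p := by
      rw [hW p hp, DD_resolvent (β := -L) hc x₀ F hFm hC hFb p hp]
      apply DD_congr _ _ _ p hp
      intro r hr
      rw [hW r hr]
      ring
    have e2 : v p = DD (-L) (fun r => g r + (L + κ) * v r) p := by
      rw [hv, DD_resolvent (β := -L) hc x₀ g hgm hC hgb p hp]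
      congr 1
      funext r
      ring
    have e3 : |W p| ≤ DD (-L) (fun r => |F r + L * W r|) p := by
      conv_lhs => rw [e1]
      exact DD_abs _ _
    have e4 : DD (-L) (fun r => |F r + L * W r|) p
        ≤ DD (-L) (fun r => (g r + (L + κ) * v r) + 1 * ((L + κ) * (|W r| - v r))) p := by
      refine DD_mono (C := C + L * C) (C' := C + (L + κ) * C) hc x₀ _ _
        (by fun_prop) (by fun_prop) ?_ ?_ ?_ p hp
      · intro r hr
        have h1 := hFb r hr
        have h2 := hWb r hr
        rw [abs_abs]
        calc |F r + L * W r| ≤ |F r| + |L * W r| := abs_add_le _ _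
          _ = |F r| + L * |W r| := by rw [abs_mul, abs_of_nonneg hL]
          _ ≤ C * psi c x₀ r + L * (C * psi c x₀ r) := by gcongr
          _ = _ := by ring
      · intro r hr
        have h1 := hgb r hr
        have h2 := hWb r hr
        have : (g r + (L + κ) * v r) + 1 * ((L + κ) * (|W r| - v r)) = g r + (L + κ) * |W r| := by ring
        rw [this]
        calc abs (g r + (L + κ) * |W r|) ≤ |g r| + abs ((L + κ) * |W r|) := abs_add_le _ _
          _ = |g r| + (L + κ) * |W r| := by rw [abs_mul, abs_of_nonneg hLκ, abs_abs]
          _ ≤ C * psi c x₀ r + (L + κ) * (C * psi c x₀ r) := by gcongr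
          _ = _ := by ring
      · intro r hr
        refine (hFW r hr).trans (le_of_eq ?_)
        ring
    have e5 := DD_lin (C := C + (L + κ) * C') (C' := (L + κ) * (C + C')) (β := -L) hc x₀
      (fun r => g r + (L + κ) * v r) (fun r => (L + κ) * (|W r| - v r)) (by fun_prop) (by fun_prop)
      (by
        intro r hr
        have h1 := hgb r hr
        have h2 := hvb r hr
        calc |g r + (L + κ) * v r| ≤ |g r| + |(L + κ) * v r| := abs_add_le _ _
          _ = |g r| + (L + κ) * |v r| := by rw [abs_mul, abs_of_nonneg hLκ]
          _ ≤ C * psi c x₀ r + (L + κ) * (C' * psi c x₀ r) := by gcongr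
          _ = _ := by ring)
      (by
        intro r hr
        have h1 := hWb r hr
        have h2 := hvb r hr
        rw [abs_mul, abs_of_nonneg hLκ]
        calc (L + κ) * abs (|W r| - v r) ≤ (L + κ) * (abs |W r| + |v r|) := by
              gcongr; exact abs_sub _ _
          _ ≤ (L + κ) * (C * psi c x₀ r + C' * psi c x₀ r) := by rw [abs_abs]; gcongr
          _ = _ := by ring) p hp 1
    rw [e5, ← e2] at e4
    linarith
  -- iterate
  set b := 2 * (L + κ) + 1 with hb
  have hb0 : 0 < b := by positivity
  have hiter : ∀ n : ℕ, ∀ p : ℝ × EuclideanSpace ℝ (Fin d), p.1 ∈ Set.Icc 0 T →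
      |W p| - v p ≤ C * (1 / 2) ^ n * (Real.exp (b * p.1) * psi c x₀ p) := by
    intro n
    induction n with
    | zero =>
      intro p hp
      have h1 := hWb p hp
      have h2 := hv0 p hp
      have h3 : 1 ≤ Real.exp (b * p.1) := Real.one_le_exp (mul_nonneg hb0.le hp.1)
      have h4 := hpsi p hp
      calc |W p| - v p ≤ C * psi c x₀ p := by linarith
        _ = C * (1 / 2) ^ 0 * (1 * psi c x₀ p) := by ring
        _ ≤ _ := by gcongr
    | succ n ih =>
      intro p hp
      refine (hstep p hp).trans ?_
      have hk := kk_psi x₀ p (hp.2.trans_lt hc)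
        (fun s => (L + κ) * (C * (1 / 2) ^ n) * Real.exp (b * s)) (by fun_prop)
      calc DD (-L) (fun r => (L + κ) * (|W r| - v r)) p
          ≤ ∫ r : ℝ × EuclideanSpace ℝ (Fin d),
            (L + κ) * (C * (1 / 2) ^ n) * Real.exp (b * r.1) * (kk p r * psi c x₀ r) := by
            unfold DD
            apply integral_mono _ hk.1
            · intro r
              by_cases h : r.1 ∈ Set.Ioo 0 p.1
              · have hr : r.1 ∈ Set.Icc 0 T := ⟨h.1.le, h.2.le.trans hp.2⟩
                have h1 := ih r hr
                have h2 := kk_nonneg p r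
                have h3 := hpsi r hr
                have h4 : Real.exp (-L * (p.1 - r.1)) ≤ 1 := by
                  apply Real.exp_le_one_iff.2
                  have := h.2
                  nlinarith
                simp only
                calc Real.exp (-L * (p.1 - r.1)) * kk p r * ((L + κ) * (|W r| - v r))
                    ≤ Real.exp (-L * (p.1 - r.1)) * kk p r * ((L + κ) *
                      (C * (1 / 2) ^ n * (Real.exp (b * r.1) * psi c x₀ r))) := by gcongr
                  _ ≤ 1 * kk p r * ((L + κ) *
                      (C * (1 / 2) ^ n * (Real.exp (b * r.1) * psi c x₀ r))) := by gcongr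
                  _ = _ := by ring
              · simp [kk_zero h]
            · refine DD_integrable (C := (L + κ) * (C + C')) hc x₀ _ (by fun_prop) ?_ p hp
              intro r hr
              have h1 := hWb r hr
              have h2 := hvb r hr
              rw [abs_mul, abs_of_nonneg hLκ]
              calc (L + κ) * abs (|W r| - v r) ≤ (L + κ) * (abs |W r| + |v r|) := by
                    gcongr; exact abs_sub _ _
                _ ≤ (L + κ) * (C * psi c x₀ r + C' * psi c x₀ r) := by rw [abs_abs]; gcongr
                _ = _ := by ring
        _ = (L + κ) * (C * (1 / 2) ^ n) * (∫ s in Set.Ioc 0 p.1, Real.exp (b * s)) * psi c x₀ p := by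
            rw [hk.2, integral_const_mul]
        _ ≤ (L + κ) * (C * (1 / 2) ^ n) * (Real.exp (b * p.1) / b) * psi c x₀ p := by
            have := hpsi p hp
            gcongr
            exact int_exp_le hb0 hp.1
        _ = ((L + κ) / b) * (C * (1 / 2) ^ n * (Real.exp (b * p.1) * psi c x₀ p)) := by ring
        _ ≤ (1 / 2) * (C * (1 / 2) ^ n * (Real.exp (b * p.1) * psi c x₀ p)) := by
            have := hpsi p hp
            refine mul_le_mul_of_nonneg_right ?_ (by positivity)
            rw [div_le_iff₀ hb0, hb]
            linarith
        _ = _ := by ring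
  have hlim : Filter.Tendsto (fun n : ℕ => C * (1 / 2 : ℝ) ^ n * (Real.exp (b * q.1) * psi c x₀ q))
      Filter.atTop (nhds (C * 0 * (Real.exp (b * q.1) * psi c x₀ q))) :=
    ((tendsto_pow_atTop_nhds_zero_of_lt_one (by norm_num) (by norm_num)).const_mul C).mul_const _
  have := ge_of_tendsto' hlim (fun n => hiter n q hq)
  simp only [mul_zero, zero_mul] at this
  linarith

/-! ### Yosida approximation -/

lemma J_spec {φ : ℝ → ℝ} (hφ : Antitone φ) (hc : Continuous φ) {l : ℝ} (hl : 0 < l) (u : ℝ) :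
    Jlam φ l u - l * φ (Jlam φ l u) = u := by
  have hsurj : Function.Surjective (fun u : ℝ => u - l * φ u) := by
    apply Continuous.surjective (by fun_prop)
    · refine Filter.tendsto_atTop_mono' _ (f₁ := fun u => u - l * φ 0) ?_
        (Filter.tendsto_atTop_add_const_right _ _ Filter.tendsto_id)
      filter_upwards [Filter.eventually_ge_atTop 0] with u hu
      have := mul_le_mul_of_nonneg_left (hφ hu) hl.le
      linarith
    · refine Filter.tendsto_atBot_mono' _ (f₁ := fun u => u - l * φ 0) ?_
        (Filter.tendsto_atBot_add_const_right _ _ Filter.tendsto_id)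
      filter_upwards [Filter.eventually_le_atBot 0] with u hu
      have := mul_le_mul_of_nonneg_left (hφ hu) hl.le
      linarith
  exact Function.invFun_eq (f := fun u : ℝ => u - l * φ u) (hsurj u)

lemma J_eq {φ : ℝ → ℝ} (hφ : Antitone φ) (hc : Continuous φ) {l : ℝ} (hl : 0 < l) (u : ℝ) :
    yosida φ l u = φ (Jlam φ l u) := by
  have := J_spec hφ hc hl u
  unfold yosida
  rw [div_eq_iff hl.ne']
  linarith

lemma J_mono {φ : ℝ → ℝ} (hφ : Antitone φ) (hc : Continuous φ) {l : ℝ} (hl : 0 < l) :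
    Monotone (Jlam φ l) := by
  intro a b hab
  by_contra! h
  have h1 := J_spec hφ hc hl a
  have h2 := J_spec hφ hc hl b
  have := mul_le_mul_of_nonneg_left (hφ h.le) hl.le
  linarith

lemma yos_anti {φ : ℝ → ℝ} (hφ : Antitone φ) (hc : Continuous φ) {l : ℝ} (hl : 0 < l) :
    Antitone (yosida φ l) := by
  intro a b hab
  rw [J_eq hφ hc hl, J_eq hφ hc hl]
  exact hφ (J_mono hφ hc hl hab)

lemma yos_lip {φ : ℝ → ℝ} (hφ : Antitone φ) (hc : Continuous φ) {l : ℝ} (hl : 0 < l) {a b : ℝ}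
    (hab : a ≤ b) : -((1 / l) * (b - a)) ≤ yosida φ l b - yosida φ l a := by
  have := J_mono hφ hc hl hab
  unfold yosida
  rw [← sub_nonneg]
  have e : (Jlam φ l b - b) / l - (Jlam φ l a - a) / l - -((1 / l) * (b - a))
      = (Jlam φ l b - Jlam φ l a) / l := by ring
  rw [e]
  exact div_nonneg (by linarith) hl.le

lemma yos_abs {φ : ℝ → ℝ} (hφ : Antitone φ) (hc : Continuous φ) {l : ℝ} (hl : 0 < l) (u : ℝ) :
    |yosida φ l u| ≤ |φ u| := by
  have h := J_spec hφ hc hl u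
  rw [J_eq hφ hc hl]
  rcases le_total (Jlam φ l u) u with h1 | h1
  · have h2 : φ (Jlam φ l u) ≤ 0 := by
      by_contra! h3
      have := mul_pos hl h3
      linarith
    have h4 := hφ h1
    rw [abs_of_nonpos h2, abs_of_nonpos (h4.trans h2)]
    linarith
  · have h2 : 0 ≤ φ (Jlam φ l u) := by
      by_contra! h3
      have := mul_pos_of_neg_of_neg (neg_neg_of_pos hl) h3
      linarith
    have h4 := hφ h1
    rw [abs_of_nonneg h2, abs_of_nonneg (h2.trans h4)]
    linarith

lemma yos_key {φ : ℝ → ℝ} (hφ : Antitone φ) (hc : Continuous φ) {l : ℝ} (hl : 0 < l) {L : ℝ}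
    (hL : 1 / l ≤ L) (a b : ℝ) :
    |yosida φ l a - yosida φ l b + L * (a - b)| ≤ L * |a - b| := by
  rcases le_total a b with h | h
  · have h1 := yos_lip hφ hc hl h
    have h2 := yos_anti hφ hc hl h
    have h3 : 0 ≤ (L - 1 / l) * (b - a) := mul_nonneg (by linarith) (by linarith)
    rw [abs_sub_comm a b, abs_of_nonneg (sub_nonneg.2 h), abs_le]
    constructor <;> nlinarith
  · have h1 := yos_lip hφ hc hl h
    have h2 := yos_anti hφ hc hl h
    have h3 : 0 ≤ (L - 1 / l) * (a - b) := mul_nonneg (by linarith) (by linarith)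
    rw [abs_of_nonneg (sub_nonneg.2 h), abs_le]
    constructor <;> nlinarith

lemma yos_meas {φ : ℝ → ℝ} (hφ : Antitone φ) (hc : Continuous φ) {l : ℝ} (hl : 0 < l) :
    Measurable (yosida φ l) := (yos_anti hφ hc hl).measurable

lemma yos_tendsto {φ : ℝ → ℝ} (hφ : Antitone φ) (hc : Continuous φ) (u : ℝ) :
    Filter.Tendsto (fun l => yosida φ l u) (nhdsWithin 0 (Set.Ioo (0 : ℝ) 1)) (nhds (φ u)) := by
  have hJ : Filter.Tendsto (fun l => Jlam φ l u) (nhdsWithin 0 (Set.Ioo (0 : ℝ) 1)) (nhds u) := by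
    rw [tendsto_iff_dist_tendsto_zero]
    have h0 : Filter.Tendsto (fun l : ℝ => l * |φ u|) (nhdsWithin 0 (Set.Ioo (0 : ℝ) 1)) (nhds 0) := by
      have : Filter.Tendsto (fun l : ℝ => l * |φ u|) (nhds 0) (nhds (0 * |φ u|)) :=
        Filter.tendsto_id.mul_const _
      rw [zero_mul] at this
      exact this.mono_left nhdsWithin_le_nhds
    refine squeeze_zero' (Filter.Eventually.of_forall fun _ => dist_nonneg) ?_ h0
    filter_upwards [self_mem_nhdsWithin] with l hl
    have h1 := J_spec hφ hc hl.1 u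
    have h2 := yos_abs hφ hc hl.1 u
    rw [J_eq hφ hc hl.1] at h2
    have h3 : Jlam φ l u - u = l * φ (Jlam φ l u) := by linarith
    rw [Real.dist_eq, h3, abs_mul, abs_of_pos hl.1]
    exact mul_le_mul_of_nonneg_left h2 hl.1.le
  have := (hc.tendsto u).comp hJ
  refine this.congr' ?_
  filter_upwards [self_mem_nhdsWithin] with l hl
  exact (J_eq hφ hc hl.1 u).symm

/-! ### Growth -/

lemma young_aux {D δ p : ℝ} (hD : 0 ≤ D) (hδ : 0 < δ) (hp : p ∈ Set.Ioo (0 : ℝ) 2) :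
    ∃ A : ℝ, ∀ r : ℝ, 0 ≤ r → D * r ^ p ≤ A + δ * r ^ 2 := by
  have h2 : 0 < 2 - p := by linarith [hp.2]
  set R := (D / δ) ^ (1 / (2 - p)) with hR
  have hR0 : 0 ≤ R := by positivity
  refine ⟨D * R ^ p, fun r hr => ?_⟩
  rcases le_total r R with h | h
  · have : D * r ^ p ≤ D * R ^ p :=
      mul_le_mul_of_nonneg_left (Real.rpow_le_rpow hr h hp.1.le) hD
    have : 0 ≤ δ * r ^ 2 := by positivity
    linarith
  · have h3 : D / δ ≤ r ^ (2 - p) := by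
      calc D / δ = R ^ (2 - p) := by
            rw [hR, ← Real.rpow_mul (by positivity), one_div, inv_mul_cancel₀ h2.ne', Real.rpow_one]
        _ ≤ r ^ (2 - p) := Real.rpow_le_rpow hR0 h h2.le
    rw [div_le_iff₀ hδ] at h3
    have h4 : r ^ (2 - p) * r ^ p = r ^ 2 := by
      rw [← Real.rpow_add_of_nonneg hr h2.le hp.1.le, sub_add_cancel]
      norm_num
    have h5 : D * r ^ p ≤ r ^ (2 - p) * δ * r ^ p :=
      mul_le_mul_of_nonneg_right h3 (by positivity)
    have h6 : 0 ≤ D * R ^ p := by positivity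
    calc D * r ^ p ≤ r ^ (2 - p) * δ * r ^ p := h5
      _ = δ * (r ^ (2 - p) * r ^ p) := by ring
      _ = δ * r ^ 2 := by rw [h4]
      _ ≤ _ := by linarith

lemma psi_lower {T : ℝ} (hT : 0 < T) (x₀ : EuclideanSpace ℝ (Fin d))
    (p : ℝ × EuclideanSpace ℝ (Fin d)) (hp : p.1 ∈ Set.Icc 0 T) :
    (2 * T) ^ (-(d : ℝ) / 2) * Real.exp ((1 / (4 * T)) * ‖p.2 - x₀‖ ^ 2) ≤ psi (2 * T) x₀ p := by
  unfold psi
  have h0 := hp.1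
  have h1 := hp.2
  have h2 : 0 < 2 * T - p.1 := by linarith
  apply mul_le_mul _ _ (by positivity) (by positivity)
  · apply Real.rpow_le_rpow_of_nonpos h2 (by linarith)
    have : (0 : ℝ) ≤ d := by positivity
    linarith
  · apply Real.exp_le_exp.2
    rw [div_eq_mul_one_div (‖p.2 - x₀‖ ^ 2), mul_comm (‖p.2 - x₀‖ ^ 2)]
    refine mul_le_mul_of_nonneg_right ?_ (by positivity)
    apply one_div_le_one_div_of_le (by positivity)
    linarith

lemma growth {T θ ν : ℝ} (hT : 0 < T) (hν : 0 < ν) (hθ : θ ∈ Set.Ioo (0 : ℝ) (2 / ν))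
    (x₀ : EuclideanSpace ℝ (Fin d)) (u : ℝ → EuclideanSpace ℝ (Fin d) → ℝ) (hu : memC d T θ x₀ u)
    {B : ℝ} (hB : 0 ≤ B) :
    ∃ C : ℝ, 0 ≤ C ∧ ∀ p : ℝ × EuclideanSpace ℝ (Fin d), p.1 ∈ Set.Icc 0 T →
      Real.exp (B * |u p.1 p.2| ^ ν) ≤ C * psi (2 * T) x₀ p := by
  obtain ⟨hcont, hvan⟩ := hu
  obtain ⟨R, hR⟩ := hvan 1 one_pos
  obtain ⟨M, hM⟩ := (isCompact_Icc.prod (isCompact_closedBall (0 : EuclideanSpace ℝ (Fin d)) R)).exists_bound_of_continuousOn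
    (hcont.mono (Set.prod_mono (le_refl (Set.Icc (0 : ℝ) T)) (Set.subset_univ _)))
  set A := 1 + |M| with hA
  have hA0 : 0 ≤ A := by positivity
  have hlin : ∀ p : ℝ × EuclideanSpace ℝ (Fin d), p.1 ∈ Set.Icc 0 T →
      |u p.1 p.2| ≤ A * (1 + ‖p.2 - x₀‖ ^ θ) := by
    intro p hp
    have h0 : 0 ≤ ‖p.2 - x₀‖ ^ θ := by positivity
    rcases le_total R ‖p.2‖ with h | h
    · have := hR p.2 h p.1 hp
      rw [div_lt_one (by positivity)] at this
      have h2 : 0 ≤ |M| * (1 + ‖p.2 - x₀‖ ^ θ) := by positivity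
      rw [hA]
      linarith
    · have h1 := hM p ⟨hp, by simpa using h⟩
      rw [Real.norm_eq_abs] at h1
      have h2 := le_abs_self M
      have h3 : 0 ≤ A * ‖p.2 - x₀‖ ^ θ := by positivity
      linarith
  have hp2 : θ * ν ∈ Set.Ioo (0 : ℝ) 2 := ⟨mul_pos hθ.1 hν, (lt_div_iff₀ hν).1 hθ.2⟩
  set D := B * (A ^ ν * 2 ^ ν) with hD
  obtain ⟨A2, hA2⟩ := young_aux (D := D) (δ := 1 / (4 * T)) (by positivity) (by positivity) hp2
  refine ⟨Real.exp (D + A2) * ((2 * T) ^ (-(d : ℝ) / 2))⁻¹, by positivity, fun p hp => ?_⟩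
  set r := ‖p.2 - x₀‖ with hr
  have hr0 : 0 ≤ r := norm_nonneg _
  have h1 : |u p.1 p.2| ^ ν ≤ A ^ ν * 2 ^ ν * (1 + r ^ (θ * ν)) := by
    calc |u p.1 p.2| ^ ν ≤ (A * (1 + r ^ θ)) ^ ν :=
          Real.rpow_le_rpow (abs_nonneg _) (hlin p hp) hν.le
      _ = A ^ ν * (1 + r ^ θ) ^ ν := Real.mul_rpow hA0 (by positivity)
      _ ≤ A ^ ν * (2 ^ ν * (1 + r ^ (θ * ν))) := by
          gcongr
          rcases le_total (r ^ θ) 1 with h | h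
          · calc (1 + r ^ θ) ^ ν ≤ 2 ^ ν := by
                  apply Real.rpow_le_rpow (by positivity) (by linarith) hν.le
              _ = 2 ^ ν * (1 + 0) := by ring
              _ ≤ _ := by gcongr; positivity
          · calc (1 + r ^ θ) ^ ν ≤ (2 * r ^ θ) ^ ν := by
                  apply Real.rpow_le_rpow (by positivity) (by linarith) hν.le
              _ = 2 ^ ν * (0 + r ^ (θ * ν)) := by
                  rw [Real.mul_rpow (by norm_num) (by positivity), ← Real.rpow_mul hr0, zero_add]
              _ ≤ _ := by gcongr; norm_num
      _ = _ := by ring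
  have h2 : B * |u p.1 p.2| ^ ν ≤ (D + A2) + (1 / (4 * T)) * r ^ 2 := by
    calc B * |u p.1 p.2| ^ ν ≤ B * (A ^ ν * 2 ^ ν * (1 + r ^ (θ * ν))) := by gcongr
      _ = D + D * r ^ (θ * ν) := by rw [hD]; ring
      _ ≤ _ := by linarith [hA2 r hr0]
  have h3 := psi_lower hT x₀ p hp
  have h4 : 0 < (2 * T) ^ (-(d : ℝ) / 2) := by positivity
  calc Real.exp (B * |u p.1 p.2| ^ ν) ≤ Real.exp ((D + A2) + (1 / (4 * T)) * r ^ 2) :=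
        Real.exp_le_exp.2 h2
    _ = Real.exp (D + A2) * ((2 * T) ^ (-(d : ℝ) / 2))⁻¹ *
        ((2 * T) ^ (-(d : ℝ) / 2) * Real.exp ((1 / (4 * T)) * r ^ 2)) := by
        rw [Real.exp_add]
        field_simp
    _ ≤ _ := by gcongr

lemma phi_growth {f : ℝ → ℝ} {κ K ν : ℝ} (hK : 0 < K) (hν : 0 < ν)
    (hf : ContDiff ℝ 1 f)
    (hgrowth : ∀ u : ℝ, |deriv f u| ≤ K * Real.exp (K * |u| ^ ν)) (u : ℝ) :
    |u| ≤ Real.exp ((K + 1 / ν) * |u| ^ ν) ∧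
    |f u - κ * u| ≤ (|f 0| + K + |κ|) * Real.exp ((K + 1 / ν) * |u| ^ ν) := by
  have hup : 0 ≤ |u| ^ ν := by positivity
  have h1 : |u| ≤ Real.exp ((1 / ν) * |u| ^ ν) := by
    rcases eq_or_lt_of_le (abs_nonneg u) with h | h
    · rw [← h]; positivity
    · calc |u| = Real.exp (Real.log |u|) := (Real.exp_log h).symm
        _ ≤ _ := by
          apply Real.exp_le_exp.2
          have := Real.log_le_rpow_div (abs_nonneg u) hν
          rw [one_div, mul_comm, ← div_eq_mul_inv]
          exact this
  have h2 : |u| ≤ Real.exp ((K + 1 / ν) * |u| ^ ν) := by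
    refine h1.trans (Real.exp_le_exp.2 ?_)
    gcongr
    linarith
  refine ⟨h2, ?_⟩
  have h3 : 1 ≤ Real.exp ((K + 1 / ν) * |u| ^ ν) := Real.one_le_exp (by positivity)
  have h4 : |f u - f 0| ≤ K * Real.exp (K * |u| ^ ν) * |u| := by
    have := Convex.norm_image_sub_le_of_norm_deriv_le (f := f) (s := Metric.closedBall (0 : ℝ) |u|)
      (C := K * Real.exp (K * |u| ^ ν)) (x := 0) (y := u)
      (fun x _ => (hf.differentiable (by norm_num)) x)
      (fun x hx => by
        have hx' : |x| ≤ |u| := by simpa using hx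
        refine (hgrowth x).trans ?_
        gcongr)
      (convex_closedBall _ _) (by simp) (by simp)
    simpa using this
  have h5 : |f u - f 0| ≤ K * Real.exp ((K + 1 / ν) * |u| ^ ν) := by
    refine h4.trans ?_
    rw [add_mul, Real.exp_add, mul_assoc]
    gcongr
  have h6 : f u - κ * u = f 0 + (f u - f 0) - κ * u := by ring
  calc |f u - κ * u| ≤ |f 0 + (f u - f 0)| + |κ * u| := by rw [h6]; exact abs_sub _ _
    _ ≤ |f 0| + |f u - f 0| + |κ| * |u| := by rw [abs_mul]; gcongr; exact abs_add_le _ _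
    _ ≤ |f 0| * Real.exp ((K + 1 / ν) * |u| ^ ν) + K * Real.exp ((K + 1 / ν) * |u| ^ ν)
        + |κ| * Real.exp ((K + 1 / ν) * |u| ^ ν) := by
        gcongr
        exact le_mul_of_one_le_right (abs_nonneg _) h3
    _ = _ := by ring

lemma both_growth {T θ ν κ K : ℝ} {f : ℝ → ℝ} (hT : 0 < T) (hK : 0 < K) (hν : 0 < ν)
    (hf : ContDiff ℝ 1 f)
    (hgrowth : ∀ u : ℝ, |deriv f u| ≤ K * Real.exp (K * |u| ^ ν))
    (hθ : θ ∈ Set.Ioo (0 : ℝ) (2 / ν))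
    (x₀ : EuclideanSpace ℝ (Fin d)) (u : ℝ → EuclideanSpace ℝ (Fin d) → ℝ) (hu : memC d T θ x₀ u) :
    ∃ C : ℝ, 0 ≤ C ∧ ∀ p : ℝ × EuclideanSpace ℝ (Fin d), p.1 ∈ Set.Icc 0 T →
      |u p.1 p.2| ≤ C * psi (2 * T) x₀ p ∧ |f (u p.1 p.2) - κ * u p.1 p.2| ≤ C * psi (2 * T) x₀ p := by
  obtain ⟨C, hC, h⟩ := growth hT hν hθ x₀ u hu (B := K + 1 / ν) (by positivity)
  refine ⟨(1 + (|f 0| + K + |κ|)) * C, by positivity, fun p hp => ?_⟩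
  obtain ⟨h1, h2⟩ := phi_growth (κ := κ) hK hν hf hgrowth (u p.1 p.2)
  have h3 := h p hp
  have hs : 0 ≤ |f 0| + K + |κ| := by positivity
  have h0 : 0 ≤ C * psi (2 * T) x₀ p := le_trans (Real.exp_pos _).le h3
  have h4 := mul_le_mul_of_nonneg_left h3 hs
  have h5 := mul_nonneg hs h0
  constructor <;> nlinarith

/-- continuous extension in time -/
noncomputable def timeExt (T : ℝ) (u : ℝ → EuclideanSpace ℝ (Fin d) → ℝ) (p : ℝ × EuclideanSpace ℝ (Fin d)) : ℝ :=
  u (max 0 (min p.1 T)) p.2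

lemma timeExt_eq {T : ℝ} (u : ℝ → EuclideanSpace ℝ (Fin d) → ℝ) {p : ℝ × EuclideanSpace ℝ (Fin d)}
    (hp : p.1 ∈ Set.Icc 0 T) : timeExt T u p = u p.1 p.2 := by
  unfold timeExt
  rw [min_eq_left hp.2, max_eq_right hp.1]

lemma timeExt_cont {T θ : ℝ} (hT : 0 < T) (x₀ : EuclideanSpace ℝ (Fin d))
    (u : ℝ → EuclideanSpace ℝ (Fin d) → ℝ) (hu : memC d T θ x₀ u) : Continuous (timeExt T u) := by
  have h := hu.1.comp_continuous
    (f := fun p : ℝ × EuclideanSpace ℝ (Fin d) => (max 0 (min p.1 T), p.2)) (by fun_prop)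
    (fun p => ⟨⟨le_max_left _ _, max_le hT.le (min_le_right _ _)⟩, Set.mem_univ _⟩)
  exact h

end aux

/-- Convergence of the Yosida-approximated solutions: if `m_λ ∈ C_{θ,x₀}`
solves the integral equation with reaction term `f_λ(u) = φ_λ(u) + κ u`
(where `φ(u) = f(u) - κ u`) and `m ∈ C_{θ,x₀}` solves the equation with `f`,
then `m_λ(t,x) → m(t,x)` as `λ → 0⁺`, for every `(t,x) ∈ [0,T] × ℝ^d`. -/
theorem yosida_solutions_tendsto
    (d : ℕ) (hd : 1 ≤ d) (T : ℝ) (hT : 0 < T)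
    (x₀ : EuclideanSpace ℝ (Fin d))
    (f : ℝ → ℝ) (κ K ν : ℝ) (hK : 0 < K) (hν : 0 < ν)
    (hf : ContDiff ℝ 1 f) (hderiv : ∀ u : ℝ, deriv f u ≤ κ)
    (hgrowth : ∀ u : ℝ, |deriv f u| ≤ K * Real.exp (K * |u| ^ ν))
    (θ : ℝ) (hθ : θ ∈ Set.Ioo (0 : ℝ) (2 / ν))
    (z : ℝ → EuclideanSpace ℝ (Fin d) → ℝ) (hz : memC d T θ x₀ z)
    (mlam : ℝ → ℝ → EuclideanSpace ℝ (Fin d) → ℝ)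
    (hmlam : ∀ lam ∈ Set.Ioo (0 : ℝ) 1, memC d T θ x₀ (mlam lam) ∧
      ∀ t ∈ Set.Icc (0 : ℝ) T, ∀ x : EuclideanSpace ℝ (Fin d),
        mlam lam t x = (∫ s in Set.Ioc (0 : ℝ) t,
          ∫ y, heatKernel d (t - s) (x - y) *
            (yosida (fun u => f u - κ * u) lam (mlam lam s y) + κ * mlam lam s y))
          + z t x)
    (m : ℝ → EuclideanSpace ℝ (Fin d) → ℝ) (hm : memC d T θ x₀ m)
    (hmeq : ∀ t ∈ Set.Icc (0 : ℝ) T, ∀ x : EuclideanSpace ℝ (Fin d),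
      m t x = (∫ s in Set.Ioc (0 : ℝ) t,
        ∫ y, heatKernel d (t - s) (x - y) * f (m s y)) + z t x) :
    ∀ t ∈ Set.Icc (0 : ℝ) T, ∀ x : EuclideanSpace ℝ (Fin d),
      Filter.Tendsto (fun lam : ℝ => mlam lam t x)
        (nhdsWithin 0 (Set.Ioo (0 : ℝ) 1)) (nhds (m t x)) := by
  set φ : ℝ → ℝ := fun u => f u - κ * u with hφdef
  have hfd : Differentiable ℝ f := hf.differentiable (by norm_num)
  have hφc : Continuous φ := by
    have := hf.continuous
    fun_prop
  have hφa : Antitone φ := by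
    apply antitone_of_deriv_nonpos
    · fun_prop
    · intro u
      have : HasDerivAt φ (deriv f u - κ) u := by
        have h := ((hfd u).hasDerivAt).sub ((hasDerivAt_id u).const_mul κ)
        exact h.congr_deriv (by simp)
      rw [this.deriv]
      linarith [hderiv u]
  have hc : T < 2 * T := by linarith
  obtain ⟨C1, hC1, hb1⟩ := both_growth (κ := κ) hT hK hν hf hgrowth hθ x₀ m hm
  set M := timeExt T m with hM
  have hMm : Measurable M := (timeExt_cont hT x₀ m hm).measurable
  have hφm : Measurable φ := hφc.measurable
  have hfm : Measurable f := hf.continuous.measurable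
  have hb1' : ∀ p : ℝ × EuclideanSpace ℝ (Fin d), p.1 ∈ Set.Icc 0 T →
      |M p| ≤ C1 * psi (2 * T) x₀ p ∧ |φ (M p)| ≤ C1 * psi (2 * T) x₀ p := by
    intro p hp
    rw [hM, timeExt_eq m hp]
    exact hb1 p hp
  have hgb : ∀ lam ∈ Set.Ioo (0 : ℝ) 1, ∀ p : ℝ × EuclideanSpace ℝ (Fin d), p.1 ∈ Set.Icc 0 T →
      |(|yosida φ lam (M p) - φ (M p)|)| ≤ (2 * C1) * psi (2 * T) x₀ p := by
    intro lam hlam p hp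
    rw [abs_abs]
    have h1 := (hb1' p hp).2
    have h2 := yos_abs hφa hφc hlam.1 (M p)
    have h3 := abs_sub (yosida φ lam (M p)) (φ (M p))
    linarith
  have hgm : ∀ lam ∈ Set.Ioo (0 : ℝ) 1,
      Measurable (fun p => |yosida φ lam (M p) - φ (M p)|) := by
    intro lam hlam
    have := yos_meas hφa hφc hlam.1
    fun_prop
  have hmain : ∀ lam ∈ Set.Ioo (0 : ℝ) 1, ∀ q : ℝ × EuclideanSpace ℝ (Fin d), q.1 ∈ Set.Icc 0 T →
      |mlam lam q.1 q.2 - m q.1 q.2| ≤ DD κ (fun p => |yosida φ lam (M p) - φ (M p)|) q := by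
    intro lam hlam q hq
    obtain ⟨hmem, heq⟩ := hmlam lam hlam
    obtain ⟨C2, hC2, hb2⟩ := both_growth (κ := κ) hT hK hν hf hgrowth hθ x₀ (mlam lam) hmem
    set N := timeExt T (mlam lam) with hN
    have hNm : Measurable N := (timeExt_cont hT x₀ _ hmem).measurable
    have hb2' : ∀ p : ℝ × EuclideanSpace ℝ (Fin d), p.1 ∈ Set.Icc 0 T →
        |N p| ≤ C2 * psi (2 * T) x₀ p ∧ |φ (N p)| ≤ C2 * psi (2 * T) x₀ p := by
      intro p hp
      rw [hN, timeExt_eq _ hp]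
      exact hb2 p hp
    have hym := yos_meas hφa hφc hlam.1
    set H1 : ℝ × EuclideanSpace ℝ (Fin d) → ℝ := fun p => yosida φ lam (N p) + κ * N p with hH1
    set H2 : ℝ × EuclideanSpace ℝ (Fin d) → ℝ := fun p => f (M p) with hH2
    have hH1m : Measurable H1 := by fun_prop
    have hH2m : Measurable H2 := by fun_prop
    have hH1b : ∀ p : ℝ × EuclideanSpace ℝ (Fin d), p.1 ∈ Set.Icc 0 T →
        |H1 p| ≤ (C2 + |κ| * C2) * psi (2 * T) x₀ p := by
      intro p hp
      obtain ⟨h1, h2⟩ := hb2' p hp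
      have h3 := yos_abs hφa hφc hlam.1 (N p)
      calc |H1 p| ≤ |yosida φ lam (N p)| + |κ * N p| := abs_add_le _ _
        _ = |yosida φ lam (N p)| + |κ| * |N p| := by rw [abs_mul]
        _ ≤ C2 * psi (2 * T) x₀ p + |κ| * (C2 * psi (2 * T) x₀ p) := by
            gcongr
            linarith
        _ = _ := by ring
    have hH2b : ∀ p : ℝ × EuclideanSpace ℝ (Fin d), p.1 ∈ Set.Icc 0 T →
        |H2 p| ≤ (C1 + |κ| * C1) * psi (2 * T) x₀ p := by
      intro p hp
      obtain ⟨h1, h2⟩ := hb1' p hp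
      have h3 : H2 p = φ (M p) + κ * M p := by simp [hH2, hφdef]
      calc |H2 p| ≤ |φ (M p)| + |κ * M p| := by rw [h3]; exact abs_add_le _ _
        _ = |φ (M p)| + |κ| * |M p| := by rw [abs_mul]
        _ ≤ C1 * psi (2 * T) x₀ p + |κ| * (C1 * psi (2 * T) x₀ p) := by gcongr
        _ = _ := by ring
    have hpsi : ∀ p : ℝ × EuclideanSpace ℝ (Fin d), p.1 ∈ Set.Icc 0 T → 0 ≤ psi (2 * T) x₀ p :=
      fun p hp => (psi_pos x₀ (hp.2.trans_lt hc)).le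
    have hl0 : 0 < 1 / lam := one_div_pos.2 hlam.1
    have hκ := neg_abs_le κ
    have hWq : |N q - M q| ≤ DD κ (fun p => |yosida φ lam (M p) - φ (M p)|) q := by
      refine comparison (C := (1 + |κ|) * (C1 + C2) + 2 * C1) (L := 1 / lam + |κ|) hc hT.le x₀
        (fun p => N p - M p) (fun p => H1 p + (-1) * H2 p) _
        (by fun_prop) (by fun_prop) (hgm lam hlam) (by positivity) (by positivity) (by linarith)
        ?_ ?_ ?_ (fun p _ => abs_nonneg _) ?_ ?_ q hq
      · intro p hp
        have h1 := (hb1' p hp).1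
        have h2 := (hb2' p hp).1
        have h3 := abs_sub (N p) (M p)
        have h4 := hpsi p hp
        have h5 : 0 ≤ |κ| * (C1 + C2) * psi (2 * T) x₀ p := by positivity
        have h6 : 0 ≤ C1 * psi (2 * T) x₀ p := by positivity
        linarith
      · intro p hp
        have h1 := hH1b p hp
        have h2 := hH2b p hp
        have h3 := abs_add_le (H1 p) (-1 * H2 p)
        rw [abs_mul, abs_neg, abs_one, one_mul] at h3
        have h4 := hpsi p hp
        have h6 : 0 ≤ C1 * psi (2 * T) x₀ p := by positivity
        linarith
      · intro p hp
        have h1 := hgb lam hlam p hp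
        have h4 := hpsi p hp
        have h5 : 0 ≤ (1 + |κ|) * (C1 + C2) * psi (2 * T) x₀ p := by positivity
        linarith
      · intro p hp
        rw [DD_lin hc x₀ H1 H2 hH1m hH2m hH1b hH2b p hp, DD_iterated hc x₀ H1 hH1m hH1b p hp,
          DD_iterated hc x₀ H2 hH2m hH2b p hp]
        simp only [hN, hM, timeExt_eq _ hp]
        rw [heq p.1 hp p.2, hmeq p.1 hp p.2]
        have e1 : ∫ s in Set.Ioc 0 p.1, ∫ y, heatKernel d (p.1 - s) (p.2 - y) *
            (yosida φ lam (mlam lam s y) + κ * mlam lam s y)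
            = ∫ s in Set.Ioc 0 p.1, ∫ y, heatKernel d (p.1 - s) (p.2 - y) * H1 (s, y) := by
          apply setIntegral_congr_fun measurableSet_Ioc
          intro s hs
          have hs' : s ∈ Set.Icc 0 T := ⟨hs.1.le, hs.2.trans hp.2⟩
          have : ∀ y, N (s, y) = mlam lam s y := fun y => timeExt_eq (mlam lam) (p := (s, y)) hs'
          simp only [hH1, this]
        have e2 : ∫ s in Set.Ioc 0 p.1, ∫ y, heatKernel d (p.1 - s) (p.2 - y) * f (m s y)
            = ∫ s in Set.Ioc 0 p.1, ∫ y, heatKernel d (p.1 - s) (p.2 - y) * H2 (s, y) := by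
          apply setIntegral_congr_fun measurableSet_Ioc
          intro s hs
          have hs' : s ∈ Set.Icc 0 T := ⟨hs.1.le, hs.2.trans hp.2⟩
          have : ∀ y, M (s, y) = m s y := fun y => timeExt_eq m (p := (s, y)) hs'
          simp only [hH2, this]
        rw [e1, e2]
        ring
      · intro p hp
        have h1 := yos_key hφa hφc hlam.1 (L := 1 / lam + |κ| + κ) (by linarith) (N p) (M p)
        have e : H1 p + -1 * H2 p + (1 / lam + |κ|) * (N p - M p)
            = (yosida φ lam (N p) - yosida φ lam (M p) + (1 / lam + |κ| + κ) * (N p - M p))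
              + (yosida φ lam (M p) - φ (M p)) := by
          simp only [hH1, hH2, hφdef]
          ring
        rw [e]
        exact (abs_add_le _ _).trans (by linarith)
    rw [hN, hM, timeExt_eq _ hq, timeExt_eq _ hq] at hWq
    exact hWq
  intro t ht x
  have hlim : Filter.Tendsto (fun lam => DD κ (fun p => |yosida φ lam (M p) - φ (M p)|) (t, x))
      (nhdsWithin 0 (Set.Ioo (0 : ℝ) 1)) (nhds 0) := by
    have h := tendsto_integral_filter_of_dominated_convergence
      (μ := (volume : Measure (ℝ × EuclideanSpace ℝ (Fin d))))
      (l := nhdsWithin 0 (Set.Ioo (0 : ℝ) 1))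
      (F := fun lam p => Real.exp (κ * (t - p.1)) * kk (t, x) p * |yosida φ lam (M p) - φ (M p)|)
      (f := fun _ => 0)
      (fun p => (Real.exp (|κ| * T) * (2 * C1)) * (kk (t, x) p * psi (2 * T) x₀ p))
      (by
        filter_upwards [self_mem_nhdsWithin] with lam hlam
        have h1 := hgm lam hlam
        have h2 := kk_meas1 (t, x)
        apply Measurable.aestronglyMeasurable
        fun_prop)
      (by
        filter_upwards [self_mem_nhdsWithin] with lam hlam
        exact Filter.Eventually.of_forall (DD_point x₀ _ (hgb lam hlam) (t, x) ht))
      (kk_psi x₀ (t, x) (ht.2.trans_lt hc) (fun _ => Real.exp (|κ| * T) * (2 * C1)) continuous_const).1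
      (Filter.Eventually.of_forall fun p => by
        have h1 := ((yos_tendsto hφa hφc (M p)).sub_const (φ (M p))).abs.const_mul
          (Real.exp (κ * (t - p.1)) * kk (t, x) p)
        simpa using h1)
    simpa [DD] using h
  rw [tendsto_iff_dist_tendsto_zero]
  refine squeeze_zero' (Filter.Eventually.of_forall fun _ => dist_nonneg) ?_ hlim
  filter_upwards [self_mem_nhdsWithin] with lam hlam
  rw [Real.dist_eq]
  exact hmain lam hlam (t, x) ht
end
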